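/- arXiv:2203.06143 — 3 statements merged into one kernel-verified Lean document; each statement's English description precedes it below -/
import Mathlib

section
/- Let s, t be integers with 1 ≤ s, t ≤ n and (s−1)(t−1)+1 ≤ n. Let D be a c-monotone drawing of K_n with respect to a point O, with vertices labeled v_1,…,v_n so that the rays from O through v_1,…,v_n appear in counterclockwise order around O, and let r be a ray emanating from O lying counterclockwise between the ray through v_n and the ray through v_1. Then there exists a set S of s vertices of D such that every edge between two vertices of S crosses r (so the subdrawing of D induced by S is generalized twisted), or there exists a set T of t vertices of D such that no edge between two vertices of T crosses r. In particular, for s = t = ⌈√n⌉, D contains a set of ⌈√n⌉ vertices whose induced subdrawing either has all its edges crossing r or has none of its edges crossing r. -/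
/-!
Around `O`, the angle is a strictly monotone function along each edge, because no ray from `O`
meets the edge twice. Hence an edge `v_i v_j` with `i < j` is the graph, in polar coordinates at
`O`, of a continuous function either over `[θ i, θ j]`, and then it misses the ray `r`, or over
`[θ j - 2π, θ i]`, and then it meets `r` (`isPolarGraph_or`, which lifts the edge through the
covering map `exp`).

The key point is that meeting `r` is transitive (`meets_trans`): if `i < j < k` and `v_i v_j`,
`v_j v_k` meet `r`, then so does `v_i v_k`. Otherwise the radial functions `A`, `B`, `C` of
`v_i v_j`, `v_j v_k`, `v_i v_k` are such that any two of them are different on their common range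
of angles apart from the common vertex, so that their order does not change there. If `C` is
below `v_j` at the angle of `v_j`, then `A` is above `C` up to the angle of `v_k`, so `A` passes
above `v_k`; then `A` is above `B` up to the angle of `v_i`, so `B` passes below `v_i`; then `B`
is below `C` up to the angle of `v_j`, so `C` passes above `v_j`, a contradiction. The other case
is symmetric.

So the relation `i < j` and `v_i v_j` meets `r` is a strict partial order, and Mirsky's theorem
(`exists_chain_or_antichain`) gives a chain of size `s` or an antichain of size `t`.
-/

open Set

/-- Points of the plane. -/
abbrev Pt : Type := ℝ × ℝ

/-- `A` is a simple (continuous, injective) arc from `p` to `q`. -/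
def IsSimpleArc (A : Set Pt) (p q : Pt) : Prop :=
  ∃ f : ℝ → Pt, ContinuousOn f (Set.Icc 0 1) ∧ Set.InjOn f (Set.Icc 0 1) ∧
    f 0 = p ∧ f 1 = q ∧ A = f '' Set.Icc 0 1

/-- A simple drawing of the complete graph `K n` in the plane:  vertices are distinct
points, edges are simple arcs connecting their endpoints, no edge passes through a
vertex other than its endpoints, two edges sharing an endpoint meet exactly in that
endpoint, and two independent edges meet in at most one point. -/
structure SimpleDrawing (n : ℕ) where
  vtx : Fin n → Pt
  vtx_inj : Function.Injective vtx
  arc : Fin n → Fin n → Set Pt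
  arc_symm : ∀ i j, arc i j = arc j i
  arc_simple : ∀ i j, i ≠ j → IsSimpleArc (arc i j) (vtx i) (vtx j)
  vtx_not_mem : ∀ i j k, i ≠ j → k ≠ i → k ≠ j → vtx k ∉ arc i j
  adj_inter : ∀ i j k, i ≠ j → i ≠ k → j ≠ k → arc i j ∩ arc i k = {vtx i}
  indep_inter : ∀ i j k l, i ≠ j → k ≠ l → i ≠ k → i ≠ l → j ≠ k → j ≠ l →
    (arc i j ∩ arc k l).Subsingleton

namespace SimpleDrawing

variable {n : ℕ}

/-- The union of all edges of the drawing. -/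
def drawingSet (D : SimpleDrawing n) : Set Pt :=
  ⋃ (i : Fin n) (j : Fin n) (_ : i ≠ j), D.arc i j

/-- The edges `v_i v_j` and `v_k v_l` cross: they meet in a point that is not a common
endpoint of the two edges. -/
def Crosses (D : SimpleDrawing n) (i j k l : Fin n) : Prop :=
  ∃ x : Pt, x ∈ D.arc i j ∧ x ∈ D.arc k l ∧
    ¬ ((x = D.vtx i ∨ x = D.vtx j) ∧ (x = D.vtx k ∨ x = D.vtx l))

end SimpleDrawing

/-- The ray emanating from `O` in direction `d`. -/
def rayFrom (O d : Pt) : Set Pt := {x : Pt | ∃ t : ℝ, 0 ≤ t ∧ x = O + t • d}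

namespace SimpleDrawing

/-- `D` is c-monotone with respect to the point `O`: `O` does not lie on the drawing and
every ray emanating from `O` meets every edge of `D` in at most one point. -/
def CMonotoneAt (D : SimpleDrawing n) (O : Pt) : Prop :=
  O ∉ D.drawingSet ∧
    ∀ d : Pt, d ≠ 0 → ∀ i j : Fin n, i ≠ j → (rayFrom O d ∩ D.arc i j).Subsingleton

/-- `D` is c-monotone. -/
def CMonotone (D : SimpleDrawing n) : Prop := ∃ O : Pt, D.CMonotoneAt O

/-- `D` is generalized twisted with respect to `O` and the ray from `O` with direction `d`:
`D` is c-monotone with respect to `O` and the ray meets every edge of `D`. -/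
def GenTwistedAt (D : SimpleDrawing n) (O d : Pt) : Prop :=
  D.CMonotoneAt O ∧ d ≠ 0 ∧ ∀ i j : Fin n, i ≠ j → (rayFrom O d ∩ D.arc i j).Nonempty

/-- `D` is generalized twisted. -/
def GenTwisted (D : SimpleDrawing n) : Prop := ∃ O d : Pt, D.GenTwistedAt O d

/-- The vertices `v_1, …, v_n` of `D` appear counterclockwise around `O`, at angles
`θ 0 < θ 1 < … < θ (n-1)`, all lying strictly (counterclockwise) between the angle `φ`
of the ray `r` with direction `d` and `φ + 2π`;  i.e. the vertices are labeled
counterclockwise around `O` and the ray `r` lies counterclockwise between the ray through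
`v_n` and the ray through `v_1`. -/
def IsCCWLabeling (D : SimpleDrawing n) (O d : Pt) (φ : ℝ) (θ : Fin n → ℝ) : Prop :=
  (∃ s : ℝ, 0 < s ∧ d = s • ((Real.cos φ, Real.sin φ) : Pt)) ∧
  StrictMono θ ∧
  (∀ i : Fin n, θ i ∈ Set.Ioo φ (φ + 2 * Real.pi)) ∧
  (∀ i : Fin n, ∃ s : ℝ, 0 < s ∧
    D.vtx i = O + s • ((Real.cos (θ i), Real.sin (θ i)) : Pt))

/-- `C` is a cell of `D`: a connected component of the complement of the drawing. -/
def IsCell (D : SimpleDrawing n) (C : Set Pt) : Prop :=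
  ∃ x : Pt, x ∉ D.drawingSet ∧ C = connectedComponentIn D.drawingSetᶜ x

/-- `C` is a vi-cell of `D`: a cell whose closure contains a vertex. -/
def IsViCell (D : SimpleDrawing n) (C : Set Pt) : Prop :=
  D.IsCell C ∧ ∃ i : Fin n, D.vtx i ∈ closure C

/-- The triangle of `D` on the three vertices `i`, `j`, `k` (as a subset of the plane). -/
def triangleSet (D : SimpleDrawing n) (i j k : Fin n) : Set Pt :=
  D.arc i j ∪ D.arc j k ∪ D.arc i k

/-- Two cells are antipodal if for every triangle of `D` they lie in different sides
(connected components of the complement) of that triangle. -/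
def Antipodal (D : SimpleDrawing n) (C₁ C₂ : Set Pt) : Prop :=
  ∀ i j k : Fin n, i ≠ j → j ≠ k → i ≠ k →
    ∀ x ∈ C₁, ∀ y ∈ C₂,
      connectedComponentIn (D.triangleSet i j k)ᶜ x ≠
        connectedComponentIn (D.triangleSet i j k)ᶜ y

/-- `D` and `E` are weakly isomorphic: some bijection of the vertices preserves
crossing pairs of edges. -/
def WeaklyIso (D E : SimpleDrawing n) : Prop :=
  ∃ σ : Fin n ≃ Fin n, ∀ i j k l : Fin n, i ≠ j → k ≠ l →
    (D.Crosses i j k l ↔ E.Crosses (σ i) (σ j) (σ k) (σ l))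

end SimpleDrawing

/-! ### Polar coordinates -/

/-- The point with polar coordinates `(r, ψ)` around `O`. -/
noncomputable def polarPt (O : Pt) (r ψ : ℝ) : Pt := O + r • ((Real.cos ψ, Real.sin ψ) : Pt)

/-- In polar coordinates around `O`, the set `A` is the graph of the continuous positive radial
function `g` over the interval of angles `[u, v]`. -/
def IsPolarGraph (O : Pt) (A : Set Pt) (g : ℝ → ℝ) (u v : ℝ) : Prop :=
  ContinuousOn g (Icc u v) ∧ (∀ ψ ∈ Icc u v, 0 < g ψ) ∧
    A = (fun ψ => polarPt O (g ψ) ψ) '' Icc u v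

lemma polarPt_int (O : Pt) (r ψ : ℝ) (k : ℤ) :
    polarPt O r (ψ + k * (2 * Real.pi)) = polarPt O r ψ := by
  simp [polarPt, Real.cos_add_int_mul_two_pi, Real.sin_add_int_mul_two_pi]

lemma polarPt_sub_two_pi (O : Pt) (r ψ : ℝ) :
    polarPt O r (ψ - 2 * Real.pi) = polarPt O r ψ := by
  simp [polarPt]

lemma polarPt_inj {O : Pt} {r r' ψ ψ' : ℝ} (hr : 0 < r) (hr' : 0 < r')
    (h : polarPt O r ψ = polarPt O r' ψ') :
    r = r' ∧ ∃ k : ℤ, ψ = ψ' + k * (2 * Real.pi) := by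
  have h1 : r * Real.cos ψ = r' * Real.cos ψ' := by simpa [polarPt] using congrArg Prod.fst h
  have h2 : r * Real.sin ψ = r' * Real.sin ψ' := by simpa [polarPt] using congrArg Prod.snd h
  have hrr : r = r' := by
    have : r ^ 2 = r' ^ 2 := by
      have e1 := Real.sin_sq_add_cos_sq ψ
      have e2 := Real.sin_sq_add_cos_sq ψ'
      calc r ^ 2 = (r * Real.cos ψ) ^ 2 + (r * Real.sin ψ) ^ 2 := by
            linear_combination (-r ^ 2) * e1
        _ = (r' * Real.cos ψ') ^ 2 + (r' * Real.sin ψ') ^ 2 := by rw [h1, h2]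
        _ = r' ^ 2 := by linear_combination (r' ^ 2) * e2
    exact (pow_left_inj₀ hr.le hr'.le two_ne_zero).1 this
  subst hrr
  refine ⟨rfl, ?_⟩
  have hc := mul_left_cancel₀ hr.ne' h1
  have hs := mul_left_cancel₀ hr.ne' h2
  have ha : (ψ : Real.Angle) = ψ' := Real.Angle.cos_sin_inj hc hs
  obtain ⟨k, hk⟩ := Real.Angle.angle_eq_iff_two_pi_dvd_sub.1 ha
  exact ⟨k, by linarith⟩

lemma cos_sin_ne_zero (ψ : ℝ) : ((Real.cos ψ, Real.sin ψ) : Pt) ≠ 0 := by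
  intro h
  have h1 : Real.cos ψ = 0 := congrArg Prod.fst h
  have h2 : Real.sin ψ = 0 := congrArg Prod.snd h
  have := Real.sin_sq_add_cos_sq ψ
  rw [h1, h2] at this
  norm_num at this

lemma polarPt_mem_ray (O : Pt) {r : ℝ} (hr : 0 < r) (ψ : ℝ) :
    polarPt O r ψ ∈ rayFrom O (Real.cos ψ, Real.sin ψ) := ⟨r, hr.le, rfl⟩

/-- If rays meet `A` at most once, every positive-radius point of `A` at an angle `ψ` in the range
of the radial function is the point of the graph at `ψ`. -/
lemma IsPolarGraph.eq_radius {O : Pt} {A : Set Pt} {g : ℝ → ℝ} {u v : ℝ}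
    (hg : IsPolarGraph O A g u v)
    (hmono : ∀ d : Pt, d ≠ 0 → (rayFrom O d ∩ A).Subsingleton)
    {ψ r : ℝ} (hψ : ψ ∈ Icc u v) (hr : 0 < r) (hA : polarPt O r ψ ∈ A) : g ψ = r := by
  have h1 : polarPt O (g ψ) ψ ∈ A := by
    rw [hg.2.2]
    exact ⟨ψ, hψ, rfl⟩
  exact (polarPt_inj (hg.2.1 ψ hψ) hr (hmono _ (cos_sin_ne_zero ψ)
    ⟨polarPt_mem_ray O (hg.2.1 ψ hψ) ψ, h1⟩ ⟨polarPt_mem_ray O hr ψ, hA⟩)).1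

lemma IsPolarGraph.mem {O : Pt} {A : Set Pt} {g : ℝ → ℝ} {u v : ℝ}
    (hg : IsPolarGraph O A g u v) {ψ : ℝ} (hψ : ψ ∈ Icc u v) : polarPt O (g ψ) ψ ∈ A := by
  rw [hg.2.2]
  exact ⟨ψ, hψ, rfl⟩

/-- A path avoiding `O` has a continuous log-radius and angle; both are packed in the lift `w` of
the path through `exp`. -/
lemma exists_polar_lift {O : Pt} (f : C(unitInterval, Pt)) (hO : ∀ t, f t ≠ O)
    {r α : ℝ} (hr : 0 < r) (h0 : f 0 = polarPt O r α) :
    ∃ w : C(unitInterval, ℂ), (w 0).im = α ∧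
      ∀ t, f t = polarPt O (Real.exp (w t).re) (w t).im := by
  let z : unitInterval → ℂ := fun t => ((f t).1 - O.1 : ℝ) + ((f t).2 - O.2 : ℝ) * Complex.I
  have hz : Continuous z := by fun_prop
  have hzre : ∀ t, (z t).re = (f t).1 - O.1 := fun t => by simp [z]
  have hzim : ∀ t, (z t).im = (f t).2 - O.2 := fun t => by simp [z]
  have hz0 : ∀ t, z t ≠ 0 := by
    intro t ht
    apply hO t
    have h1 := hzre t
    have h2 := hzim t
    rw [ht] at h1 h2
    simp only [Complex.zero_re, Complex.zero_im] at h1 h2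
    exact Prod.ext (by linarith) (by linarith)
  let γ : C(unitInterval, {z : ℂ // z ≠ 0}) := ⟨fun t => ⟨z t, hz0 t⟩, by fun_prop⟩
  have hexp : ∀ w : ℂ, Complex.exp w =
      (Real.exp w.re * Real.cos w.im : ℝ) + (Real.exp w.re * Real.sin w.im : ℝ) * Complex.I := by
    intro w
    apply Complex.ext
    · simp [Complex.exp_re, -Complex.ofReal_mul, -Complex.ofReal_exp]
    · simp [Complex.exp_im, -Complex.ofReal_mul, -Complex.ofReal_exp]
  have hγ0 : γ 0 = (⟨_, Complex.exp_ne_zero (⟨Real.log r, α⟩ : ℂ)⟩ : {z : ℂ // z ≠ 0}) := by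
    apply Subtype.ext
    change z 0 = Complex.exp _
    rw [hexp]
    simp [z, h0, polarPt, Real.exp_log hr]
  obtain ⟨w, hw, hw0⟩ := Complex.isCoveringMap_exp.exists_path_lifts γ ⟨Real.log r, α⟩ hγ0
  refine ⟨w, by rw [hw0], fun t => ?_⟩
  have h1 : Complex.exp (w t) = z t := congrArg Subtype.val (congrFun hw t)
  have hre := congrArg Complex.re h1
  have him := congrArg Complex.im h1
  rw [Complex.exp_re, hzre] at hre
  rw [Complex.exp_im, hzim] at him
  apply Prod.ext
  · simp only [polarPt, Prod.fst_add, Prod.smul_fst, smul_eq_mul]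
    linarith
  · simp only [polarPt, Prod.snd_add, Prod.smul_snd, smul_eq_mul]
    linarith

/-- A path with continuous log-radius and injective angle is a polar graph over the range of the
angle. -/
lemma isPolarGraph_of_lift {O : Pt} (w : C(unitInterval, ℂ))
    (hinj : Function.Injective fun t => (w t).im) {u v : ℝ}
    (hrange : range (fun t => (w t).im) = Icc u v) :
    ∃ g, IsPolarGraph O (range fun t => polarPt O (Real.exp (w t).re) (w t).im) g u v := by
  set a : unitInterval → ℝ := fun t => (w t).im
  have hac : Continuous a := by fun_prop
  -- The angle is an embedding by compactness, so the radius depends continuously on the angle.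
  let e := (hac.isClosedEmbedding hinj).isEmbedding.toHomeomorph
  let g : ℝ → ℝ := Function.extend a (fun t => Real.exp (w t).re) 0
  have hga : ∀ t, g (a t) = Real.exp (w t).re := fun t => hinj.extend_apply _ _ t
  refine ⟨g, ?_, ?_, ?_⟩
  · rw [← hrange, continuousOn_iff_continuous_domRestrict]
    have : (range a).domRestrict g = fun x => Real.exp (w (e.symm x)).re := by
      funext x
      obtain ⟨t, rfl⟩ := e.surjective x
      rw [Homeomorph.symm_apply_apply]
      exact hga t
    rw [this]
    fun_prop
  · rw [← hrange]
    rintro _ ⟨t, rfl⟩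
    rw [hga]
    positivity
  · rw [← hrange, ← range_comp]
    congr 1
    funext t
    simp only [Function.comp_apply, hga]
    rfl

/-- An edge with endpoints at angles `α < β < α + 2π` is a polar graph over one of the two
intervals of angles joining its endpoints. -/
lemma isPolarGraph_or {O p q : Pt} {A : Set Pt} (hA : IsSimpleArc A p q) (hO : O ∉ A)
    (hmono : ∀ d : Pt, d ≠ 0 → (rayFrom O d ∩ A).Subsingleton)
    {rp rq α β : ℝ} (hrp : 0 < rp) (hrq : 0 < rq) (hp : p = polarPt O rp α)
    (hq : q = polarPt O rq β) (hαβ : α < β) (hβα : β < α + 2 * Real.pi) :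
    (∃ g, IsPolarGraph O A g α β) ∨ (∃ g, IsPolarGraph O A g (β - 2 * Real.pi) α) := by
  obtain ⟨f, hfc, hfi, hf0, hf1, rfl⟩ := hA
  let F : C(unitInterval, Pt) := ⟨fun t => f t, hfc.domRestrict⟩
  have hFr : range F = f '' Icc 0 1 := by
    ext x
    simp only [mem_range, mem_image]
    exact ⟨fun ⟨t, ht⟩ => ⟨t, t.2, ht⟩, fun ⟨t, ht, h⟩ => ⟨⟨t, ht⟩, h⟩⟩
  have hFi : Function.Injective F := fun t t' h => Subtype.ext (hfi t.2 t'.2 h)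
  rw [← hFr] at hO hmono ⊢
  obtain ⟨w, hw0, hw⟩ := exists_polar_lift F (fun t ht => hO ⟨t, ht⟩) hrp
    ((show F 0 = p from hf0).trans hp)
  have hF1 : F 1 = polarPt O rq β := (show F 1 = q from hf1).trans hq
  have hrg : range F = range fun t => polarPt O (Real.exp (w t).re) (w t).im :=
    congrArg range (funext hw)
  have hinj : ∀ t t' (k : ℤ), (w t).im = (w t').im + k * (2 * Real.pi) → t = t' := by
    intro t t' k h
    apply hFi
    refine hmono _ (cos_sin_ne_zero (w t').im) ⟨?_, t, rfl⟩ ⟨?_, t', rfl⟩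
    · rw [hw t, h, polarPt_int]
      exact polarPt_mem_ray O (Real.exp_pos _) _
    · rw [hw t']
      exact polarPt_mem_ray O (Real.exp_pos _) _
  have hai : Function.Injective fun t => (w t).im := fun t t' h =>
    hinj t t' 0 (by simpa using h)
  have hac : Continuous fun t => (w t).im := by fun_prop
  obtain ⟨k, hk⟩ := (polarPt_inj (Real.exp_pos _) hrq ((hw 1).symm.trans hF1)).2
  have hpi := Real.pi_pos
  -- The total variation of the angle is below `2π`, which pins down the final angle.
  rcases hac.strictMono_of_inj_boundedOrder' hai with hm | hm
  · left
    have hsub := intermediate_value_univ (0 : unitInterval) 1 hac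
    have h01 : (w 0).im < (w 1).im := hm (by simp)
    have hlt : (w 1).im < (w 0).im + 2 * Real.pi := by
      by_contra! hle
      obtain ⟨t, ht⟩ := hsub ⟨by linarith, hle⟩
      have h0 := hinj t 0 1 (by simpa using ht)
      simp only [h0] at ht
      linarith
    have hk0 : k = 0 := by
      have h1 : (-1 : ℝ) < k := by nlinarith
      have h2 : (k : ℝ) < 1 := by nlinarith
      have h1' : -1 < k := by exact_mod_cast h1
      have h2' : k < 1 := by exact_mod_cast h2
      omega
    have h1β : (w 1).im = β := by rw [hk, hk0]; simp
    rw [hrg]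
    refine isPolarGraph_of_lift w hai ?_
    rw [← hw0, ← h1β]
    refine Subset.antisymm ?_ hsub
    rintro _ ⟨t, rfl⟩
    exact ⟨hm.monotone bot_le, hm.monotone le_top⟩
  · right
    have hsub := intermediate_value_univ (1 : unitInterval) 0 hac
    have h01 : (w 1).im < (w 0).im := hm (by simp)
    have hlt : (w 0).im - 2 * Real.pi < (w 1).im := by
      by_contra! hle
      obtain ⟨t, ht⟩ := hsub ⟨hle, by linarith⟩
      have h0 := hinj t 0 (-1) (by simp only [ht]; push_cast; ring)
      simp only [h0] at ht
      linarith
    have hk0 : k = -1 := by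
      have h1 : (-2 : ℝ) < k := by nlinarith
      have h2 : (k : ℝ) < 0 := by nlinarith
      have h1' : -2 < k := by exact_mod_cast h1
      have h2' : k < 0 := by exact_mod_cast h2
      omega
    have h1β : (w 1).im = β - 2 * Real.pi := by rw [hk, hk0]; push_cast; ring
    rw [hrg]
    refine isPolarGraph_of_lift w hai ?_
    rw [← hw0, ← h1β]
    refine Subset.antisymm ?_ hsub
    rintro _ ⟨t, rfl⟩
    exact ⟨hm.antitone le_top, hm.antitone bot_le⟩

/-! ### Edges meeting the ray -/

lemma pos_iff_pos_of_ne_zero {F : ℝ → ℝ} {u v : ℝ} (huv : u ≤ v) (hF : ContinuousOn F (Icc u v))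
    (h0 : ∀ x ∈ Icc u v, F x ≠ 0) : 0 < F u ↔ 0 < F v := by
  constructor
  · intro h
    by_contra! h'
    obtain ⟨x, hx, hx0⟩ := intermediate_value_Icc' huv hF ⟨h', h.le⟩
    exact h0 x hx hx0
  · intro h
    by_contra! h'
    obtain ⟨x, hx, hx0⟩ := intermediate_value_Icc huv hF ⟨h', h.le⟩
    exact h0 x hx hx0

/-- A polar graph meets the ray at angle `φ` if its range of angles contains `φ`. -/
lemma IsPolarGraph.ray_nonempty {O d : Pt} {A : Set Pt} {g : ℝ → ℝ} {u v φ s : ℝ}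
    (hg : IsPolarGraph O A g u v) (hs : 0 < s) (hd : d = s • ((Real.cos φ, Real.sin φ) : Pt))
    (hφ : φ ∈ Icc u v) : (rayFrom O d ∩ A).Nonempty := by
  refine ⟨_, ⟨g φ / s, (div_pos (hg.2.1 φ hφ) hs).le, ?_⟩, hg.mem hφ⟩
  rw [hd, smul_smul, div_mul_cancel₀ _ hs.ne']
  rfl

lemma IsPolarGraph.ray_empty {O d : Pt} {A : Set Pt} {g : ℝ → ℝ} {u v φ s : ℝ}
    (hg : IsPolarGraph O A g u v) (hO : O ∉ A) (hs : 0 < s)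
    (hd : d = s • ((Real.cos φ, Real.sin φ) : Pt))
    (hu : φ < u) (hv : v < φ + 2 * Real.pi) : rayFrom O d ∩ A = ∅ := by
  rw [eq_empty_iff_forall_notMem]
  rintro x ⟨⟨c, hc, rfl⟩, hx⟩
  have hc0 : 0 < c := by
    refine lt_of_le_of_ne hc fun h => hO ?_
    rw [← h] at hx
    simpa using hx
  have hx' := hx
  rw [hg.2.2] at hx'
  obtain ⟨ψ, hψ, h⟩ := hx'
  have h' : polarPt O (g ψ) ψ = polarPt O (c * s) φ := by
    rw [show polarPt O (g ψ) ψ = O + c • d from h, hd, smul_smul]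
    rfl
  obtain ⟨-, k, hk⟩ := polarPt_inj (hg.2.1 ψ hψ) (mul_pos hc0 hs) h'
  have hpi := Real.pi_pos
  have h1 : (0 : ℝ) < k := by nlinarith [hψ.1]
  have h2 : (k : ℝ) < 1 := by nlinarith [hψ.2]
  have h1' : 0 < k := by exact_mod_cast h1
  have h2' : k < 1 := by exact_mod_cast h2
  omega

/-- Two edges at `v_i` do not share a point at an angle strictly between `θ i` and `θ i ± 2π`. -/
lemma not_mem_both {n : ℕ} (D : SimpleDrawing n) {O : Pt} {i j k : Fin n} (hij : i ≠ j)
    (hik : i ≠ k) (hjk : j ≠ k) {ri θi r ψ : ℝ} (hri : 0 < ri)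
    (hi : D.vtx i = polarPt O ri θi) (hr : 0 < r)
    (hψ : (θi < ψ ∧ ψ < θi + 2 * Real.pi) ∨ (θi - 2 * Real.pi < ψ ∧ ψ < θi))
    (h1 : polarPt O r ψ ∈ D.arc i j) (h2 : polarPt O r ψ ∈ D.arc i k) : False := by
  have h : polarPt O r ψ ∈ D.arc i j ∩ D.arc i k := ⟨h1, h2⟩
  rw [D.adj_inter i j k hij hik hjk, mem_singleton_iff, hi] at h
  obtain ⟨-, k, hk⟩ := polarPt_inj hr hri h
  have hpi := Real.pi_pos
  rcases hψ with hψ | hψ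
  · have h1 : (0 : ℝ) < k := by nlinarith [hψ.1]
    have h2 : (k : ℝ) < 1 := by nlinarith [hψ.2]
    have h1' : 0 < k := by exact_mod_cast h1
    have h2' : k < 1 := by exact_mod_cast h2
    omega
  · have h1 : (-1 : ℝ) < k := by nlinarith [hψ.1]
    have h2 : (k : ℝ) < 0 := by nlinarith [hψ.2]
    have h1' : -1 < k := by exact_mod_cast h1
    have h2' : k < 0 := by exact_mod_cast h2
    omega

/-- A triangle cannot have its two short edges `v_i v_j`, `v_j v_k` going around through the ray
and its long edge `v_i v_k` not. -/
lemma no_bad_triangle {n : ℕ} (D : SimpleDrawing n) {O : Pt} (hC : D.CMonotoneAt O)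
    {i j k : Fin n} (hij : i ≠ j) (hik : i ≠ k) (hjk : j ≠ k) {ri rj rk x y z : ℝ}
    (hri : 0 < ri) (hrj : 0 < rj) (hrk : 0 < rk) (hi : D.vtx i = polarPt O ri x)
    (hj : D.vtx j = polarPt O rj y) (hk : D.vtx k = polarPt O rk z)
    (hxy : x < y) (hyz : y < z) (hzx : z < x + 2 * Real.pi) {A B C : ℝ → ℝ}
    (hA : IsPolarGraph O (D.arc i j) A (y - 2 * Real.pi) x)
    (hB : IsPolarGraph O (D.arc j k) B (z - 2 * Real.pi) y)
    (hC' : IsPolarGraph O (D.arc i k) C x z) : False := by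
  have hpi := Real.pi_pos
  have left_mem : ∀ {a b : Fin n}, a ≠ b → D.vtx a ∈ D.arc a b := by
    intro a b hab
    obtain ⟨f, -, -, h0, -, hf⟩ := D.arc_simple a b hab
    rw [hf, ← h0]
    exact ⟨0, by simp, rfl⟩
  have right_mem : ∀ {a b : Fin n}, a ≠ b → D.vtx b ∈ D.arc a b := by
    intro a b hab
    rw [D.arc_symm]
    exact left_mem hab.symm
  have hAx : A x = ri := hA.eq_radius (fun d hd => hC.2 d hd i j hij)
    ⟨by linarith, le_rfl⟩ hri (hi ▸ left_mem hij)
  have hAy : A (y - 2 * Real.pi) = rj := hA.eq_radius (fun d hd => hC.2 d hd i j hij)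
    ⟨le_rfl, by linarith⟩ hrj (by rw [polarPt_sub_two_pi]; exact hj ▸ right_mem hij)
  have hBy : B y = rj := hB.eq_radius (fun d hd => hC.2 d hd j k hjk)
    ⟨by linarith, le_rfl⟩ hrj (hj ▸ left_mem hjk)
  have hBz : B (z - 2 * Real.pi) = rk := hB.eq_radius (fun d hd => hC.2 d hd j k hjk)
    ⟨le_rfl, by linarith⟩ hrk (by rw [polarPt_sub_two_pi]; exact hk ▸ right_mem hjk)
  have hCx : C x = ri := hC'.eq_radius (fun d hd => hC.2 d hd i k hik)
    ⟨le_rfl, by linarith⟩ hri (hi ▸ left_mem hik)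
  have hCz : C z = rk := hC'.eq_radius (fun d hd => hC.2 d hd i k hik)
    ⟨by linarith, le_rfl⟩ hrk (hk ▸ right_mem hik)
  -- `A` against `C` over `[y, z]`, apart from the common vertex `v_i`.
  have s1 : 0 < A (y - 2 * Real.pi) - C y ↔ 0 < A (z - 2 * Real.pi) - C z := by
    refine pos_iff_pos_of_ne_zero (F := fun ψ => A (ψ - 2 * Real.pi) - C ψ) hyz.le ?_ ?_
    · refine ContinuousOn.sub (hA.1.comp (by fun_prop) ?_)
        (hC'.1.mono (Icc_subset_Icc hxy.le le_rfl))
      intro ψ hψ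
      exact ⟨by linarith [hψ.1], by linarith [hψ.2]⟩
    · intro ψ hψ h0
      have hψA : ψ - 2 * Real.pi ∈ Icc (y - 2 * Real.pi) x :=
        ⟨by linarith [hψ.1], by linarith [hψ.2]⟩
      have hψC : ψ ∈ Icc x z := ⟨by linarith [hψ.1], hψ.2⟩
      have m1 := hA.mem hψA
      rw [polarPt_sub_two_pi, sub_eq_zero.1 h0] at m1
      exact not_mem_both D hij hik hjk hri hi (hC'.2.1 ψ hψC)
        (Or.inl ⟨by linarith [hψ.1], by linarith [hψ.2]⟩) m1 (hC'.mem hψC)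
  -- `A` against `B` over `[z - 2π, x]`, apart from the common vertex `v_j`.
  have s2 : 0 < A (z - 2 * Real.pi) - B (z - 2 * Real.pi) ↔ 0 < A x - B x := by
    refine pos_iff_pos_of_ne_zero (F := fun ψ => A ψ - B ψ) (by linarith) ?_ ?_
    · exact ContinuousOn.sub (hA.1.mono (Icc_subset_Icc (by linarith) le_rfl))
        (hB.1.mono (Icc_subset_Icc le_rfl hxy.le))
    · intro ψ hψ h0
      have hψA : ψ ∈ Icc (y - 2 * Real.pi) x := ⟨by linarith [hψ.1], hψ.2⟩
      have hψB : ψ ∈ Icc (z - 2 * Real.pi) y := ⟨hψ.1, by linarith [hψ.2]⟩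
      have m1 := hA.mem hψA
      rw [sub_eq_zero.1 h0, D.arc_symm] at m1
      exact not_mem_both D hij.symm hjk hik hrj hj (hB.2.1 ψ hψB)
        (Or.inr ⟨by linarith [hψ.1], by linarith [hψ.2]⟩) m1 (hB.mem hψB)
  -- `B` against `C` over `[x, y]`, apart from the common vertex `v_k`.
  have n3 : ∀ ψ ∈ Icc x y, B ψ - C ψ ≠ 0 := by
    intro ψ hψ h0
    have hψB : ψ ∈ Icc (z - 2 * Real.pi) y := ⟨by linarith [hψ.1], hψ.2⟩
    have hψC : ψ ∈ Icc x z := ⟨hψ.1, by linarith [hψ.2]⟩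
    have m1 := hB.mem hψB
    rw [sub_eq_zero.1 h0, D.arc_symm] at m1
    have m2 := hC'.mem hψC
    rw [D.arc_symm] at m2
    exact not_mem_both D hjk.symm hik.symm hij.symm hrk hk (hC'.2.1 ψ hψC)
      (Or.inr ⟨by linarith [hψ.1], by linarith [hψ.2]⟩) m1 m2
  have s3 : 0 < B x - C x ↔ 0 < B y - C y := by
    refine pos_iff_pos_of_ne_zero (F := fun ψ => B ψ - C ψ) hxy.le ?_ n3
    exact ContinuousOn.sub (hB.1.mono (Icc_subset_Icc (by linarith) le_rfl))
      (hC'.1.mono (Icc_subset_Icc le_rfl hyz.le))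
  have n3x := n3 x ⟨le_rfl, hxy.le⟩
  rw [hAy, hCz] at s1
  rw [hBz, hAx] at s2
  rw [hBy] at s3
  rw [hCx] at s3 n3x
  have s : 0 < B x - ri ↔ 0 < ri - B x := s3.trans (s1.trans s2)
  rcases lt_or_gt_of_ne n3x with h | h
  · linarith [s.2 (by linarith)]
  · linarith [s.1 h]

/-- Meeting the ray is transitive along the counterclockwise order of the vertices. -/
lemma meets_trans {n : ℕ} (D : SimpleDrawing n) {O d : Pt} {φ : ℝ} {θ : Fin n → ℝ}
    (hC : D.CMonotoneAt O) (hLab : D.IsCCWLabeling O d φ θ) {i j k : Fin n} (hij : i < j)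
    (hjk : j < k) (h1 : (rayFrom O d ∩ D.arc i j).Nonempty)
    (h2 : (rayFrom O d ∩ D.arc j k).Nonempty) : (rayFrom O d ∩ D.arc i k).Nonempty := by
  obtain ⟨⟨s, hs, hd⟩, hθ, hI, hv⟩ := hLab
  choose r hr hv using hv
  have hO : ∀ a b, a ≠ b → O ∉ D.arc a b := fun a b hab h =>
    hC.1 (mem_iUnion.2 ⟨a, mem_iUnion.2 ⟨b, mem_iUnion.2 ⟨hab, h⟩⟩⟩)
  have key : ∀ a b : Fin n, a < b → (∃ g, IsPolarGraph O (D.arc a b) g (θ a) (θ b)) ∨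
      (∃ g, IsPolarGraph O (D.arc a b) g (θ b - 2 * Real.pi) (θ a)) := fun a b hab =>
    isPolarGraph_or (D.arc_simple a b hab.ne) (hO a b hab.ne)
      (fun d hd => hC.2 d hd a b hab.ne) (hr a) (hr b) (hv a) (hv b) (hθ hab)
      (by linarith [(hI a).1, (hI b).2])
  have cross : ∀ a b : Fin n, a < b → (rayFrom O d ∩ D.arc a b).Nonempty →
      ∃ g, IsPolarGraph O (D.arc a b) g (θ b - 2 * Real.pi) (θ a) := by
    intro a b hab h
    refine (key a b hab).resolve_left ?_
    rintro ⟨g, hg⟩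
    rw [hg.ray_empty (hO a b hab.ne) hs hd (hI a).1 (hI b).2] at h
    exact not_nonempty_empty h
  have hik := hij.trans hjk
  obtain ⟨A, hA⟩ := cross i j hij h1
  obtain ⟨B, hB⟩ := cross j k hjk h2
  rcases key i k hik with ⟨C, hC'⟩ | ⟨C, hC'⟩
  · exact (no_bad_triangle D hC hij.ne hik.ne hjk.ne (hr i) (hr j) (hr k) (hv i) (hv j) (hv k)
      (hθ hij) (hθ hjk) (by linarith [(hI i).1, (hI k).2]) hA hB hC').elim
  · exact hC'.ray_nonempty hs hd ⟨by linarith [(hI k).2], (hI i).1.le⟩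

/-! ### Mirsky's theorem -/

/-- Mirsky's theorem for a strict partial order contained in a linear order: more than `k * m`
elements contain a chain of `k + 1` elements or an antichain of `m + 1` elements. -/
lemma exists_chain_or_antichain {α : Type*} [LinearOrder α] (R : α → α → Prop)
    (hlt : ∀ a b, R a b → a < b) (htr : ∀ a b c, R a b → R b c → R a c) (m k : ℕ)
    (V : Finset α) (hV : k * m < V.card) :
    (∃ S ⊆ V, S.card = k + 1 ∧ ∀ a ∈ S, ∀ b ∈ S, a < b → R a b) ∨
    (∃ T ⊆ V, T.card = m + 1 ∧ ∀ a ∈ T, ∀ b ∈ T, ¬ R a b) := by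
  classical
  induction k generalizing V with
  | zero =>
    left
    obtain ⟨a, ha⟩ := Finset.card_pos.1 (by omega : 0 < V.card)
    refine ⟨{a}, by simpa using ha, by simp, ?_⟩
    intro x hx y hy hxy
    rw [Finset.mem_singleton] at hx hy
    rw [hx, hy] at hxy
    exact absurd hxy (lt_irrefl _)
  | succ k ih =>
    -- The minimal elements of `V` form an antichain; the rest contains a shorter chain, which
    -- extends by an element of `V` below its least element.
    set M := V.filter fun b => ∀ a ∈ V, ¬ R a b
    set W := V.filter fun b => ¬ ∀ a ∈ V, ¬ R a b
    have hcard : M.card + W.card = V.card := Finset.card_filter_add_card_filter_not _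
    by_cases hMm : m + 1 ≤ M.card
    · right
      obtain ⟨T, hTM, hT⟩ := Finset.exists_subset_card_eq hMm
      refine ⟨T, hTM.trans (Finset.filter_subset _ _), hT, fun a ha b hb => ?_⟩
      exact (Finset.mem_filter.1 (hTM hb)).2 a (Finset.mem_filter.1 (hTM ha)).1
    · have hWk : k * m < W.card := by
        rw [Nat.succ_mul] at hV
        omega
      rcases ih W hWk with ⟨S, hSW, hS, hR⟩ | ⟨T, hTW, hT, hR⟩
      · left
        have hne : S.Nonempty := Finset.card_pos.1 (by omega)
        have hc := S.min'_mem hne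
        have hcW := (Finset.mem_filter.1 (hSW hc)).2
        push Not at hcW
        obtain ⟨x, hxV, hxc⟩ := hcW
        have hxS : ∀ b ∈ S, R x b := by
          intro b hb
          rcases (S.min'_le b hb).eq_or_lt with h | h
          · rwa [← h]
          · exact htr _ _ _ hxc (hR _ hc b hb h)
        have hx : x ∉ S := fun h => lt_irrefl _ (hlt _ _ (hxS x h))
        refine ⟨insert x S, ?_, by rw [Finset.card_insert_of_notMem hx, hS], ?_⟩
        · exact Finset.insert_subset hxV (hSW.trans (Finset.filter_subset _ _))
        · intro a ha b hb hab
          rcases Finset.mem_insert.1 ha with rfl | ha'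
          · rcases Finset.mem_insert.1 hb with rfl | hb
            · exact absurd hab (lt_irrefl _)
            · exact hxS b hb
          · rcases Finset.mem_insert.1 hb with rfl | hb
            · exact absurd (hlt _ _ (hxS a ha')) hab.asymm
            · exact hR a ha' b hb hab
      · exact Or.inr ⟨T, hTW.trans (Finset.filter_subset _ _), hT, hR⟩

/-- In a c-monotone drawing of `K n` with vertices labeled counterclockwise
around `O` and a ray `r` (direction `d`) counterclockwise between `v_n` and `v_1`, for all
`1 ≤ s,t ≤ n` with `(s-1)(t-1)+1 ≤ n`, there are `s` vertices all of whose connecting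
edges cross `r` (inducing a generalized twisted subdrawing), or `t` vertices none of whose
connecting edges cross `r` (inducing a monotone subdrawing). -/
theorem stmt_6 (n s t : ℕ) (hs1 : 1 ≤ s) (hsn : s ≤ n) (ht1 : 1 ≤ t) (htn : t ≤ n)
    (hst : (s - 1) * (t - 1) + 1 ≤ n)
    (D : SimpleDrawing n) (O d : Pt) (φ : ℝ) (θ : Fin n → ℝ)
    (hC : D.CMonotoneAt O) (hLab : D.IsCCWLabeling O d φ θ) :
    (∃ S : Finset (Fin n), S.card = s ∧
       ∀ i ∈ S, ∀ j ∈ S, i ≠ j → (rayFrom O d ∩ D.arc i j).Nonempty) ∨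
    (∃ T : Finset (Fin n), T.card = t ∧
       ∀ i ∈ T, ∀ j ∈ T, i ≠ j → rayFrom O d ∩ D.arc i j = ∅) := by
  rcases exists_chain_or_antichain
    (fun i j : Fin n => i < j ∧ (rayFrom O d ∩ D.arc i j).Nonempty) (fun _ _ h => h.1)
    (fun a b c h h' => ⟨h.1.trans h'.1, meets_trans D hC hLab h.1 h'.1 h.2 h'.2⟩)
    (t - 1) (s - 1) Finset.univ (by simpa using hst) with ⟨S, -, hS, hR⟩ | ⟨T, -, hT, hR⟩
  · left
    refine ⟨S, by omega, fun i hi j hj hij => ?_⟩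
    rcases hij.lt_or_gt with h | h
    · exact (hR i hi j hj h).2
    · rw [D.arc_symm]
      exact (hR j hj i hi h).2
  · right
    refine ⟨T, by omega, fun i hi j hj hij => ?_⟩
    rcases hij.lt_or_gt with h | h
    · exact not_nonempty_iff_eq_empty.1 fun h' => hR i hi j hj ⟨h, h'⟩
    · rw [D.arc_symm]
      exact not_nonempty_iff_eq_empty.1 fun h' => hR j hj i hi ⟨h, h'⟩
end

section
/- Let D be a c-monotone drawing of K_n with respect to a point O, with vertices labeled v_1,…,v_n so that the rays from O through v_1,…,v_n appear in counterclockwise order around O, and let r be a ray emanating from O lying counterclockwise between the ray through v_n and the ray through v_1. If i < j < k and both edges v_iv_j and v_jv_k cross r, then the edge v_iv_k also crosses r. Consequently, the relation defined by v_i ⪯ v_j iff i = j, or i < j and the edge v_iv_j crosses r, is a partial order on the vertices of D. -/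
/-!
Work in polar coordinates around `O`. Lifting the angle of an edge `v_i v_j` (`i < j`) through the
covering `Circle.exp`, c-monotonicity makes the lifted angle injective modulo `2π`, so the edge is
the graph of a continuous positive radius function over an interval of length less than `2π`: either
over `[θ i, θ j]`, and then it misses `r`, or over `[θ j - 2π, θ i]`, and then it crosses `r`
(`arc_polar`).

Let `a < b < c` be the angles of `v_i, v_j, v_k`, and suppose that `v_i v_j` and `v_j v_k` cross `r`
while `v_i v_k` does not. The radius functions `f, g, h` of `v_i v_j, v_j v_k, v_i v_k` live over
`[b - 2π, a]`, `[c - 2π, b]`, `[a, c]`. Two of the edges meet only in their common vertex, so each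
pair keeps its order along the angular interval where both are defined. Going once around `O` and
using that the edges agree at the common vertices, `h < g` at angle `b` is equivalent to `f < g`
at `a`, hence to `f < h` at `c`, hence to `g < h` at `b` (`no_radial_triple`). This is impossible,
since `h` and `g` differ at angle `b`.
-/

open Set

/-- The comparability relation: `v_i ⪯ v_j` iff `i = j`, or `i < j` and the edge
`v_i v_j` crosses the ray `r` (from `O` with direction `d`). -/
def crossRel {n : ℕ} (D : SimpleDrawing n) (O d : Pt) (i j : Fin n) : Prop :=
  i = j ∨ (i < j ∧ (rayFrom O d ∩ D.arc i j).Nonempty)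

/-! ### Polar coordinates -/

/-- The unit vector at angle `t`. -/
noncomputable def dir (t : ℝ) : Pt := (Real.cos t, Real.sin t)

lemma dir_ne_zero (t : ℝ) : dir t ≠ 0 := by
  intro h
  have h1 : Real.cos t = 0 := congrArg Prod.fst h
  have h2 : Real.sin t = 0 := congrArg Prod.snd h
  have := Real.sin_sq_add_cos_sq t
  rw [h1, h2] at this
  norm_num at this

lemma dir_sub_two_pi (t : ℝ) : dir (t - 2 * Real.pi) = dir t := by
  simp [dir, Real.cos_sub_two_pi, Real.sin_sub_two_pi]

lemma dir_eq_of_angle {u v : ℝ} (k : ℤ) (h : u - v = 2 * Real.pi * k) : dir u = dir v := by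
  have : u = v + k * (2 * Real.pi) := by linarith
  rw [this]
  simp [dir, Real.cos_add_int_mul_two_pi, Real.sin_add_int_mul_two_pi]

lemma radius_eq {O : Pt} {x y t : ℝ} (h : O + x • dir t = O + y • dir t) : x = y :=
  smul_left_injective ℝ (dir_ne_zero t) (add_left_cancel h)

lemma polar_inj {O : Pt} {x y u v : ℝ} (hx : 0 < x) (hy : 0 < y)
    (h : O + x • dir u = O + y • dir v) : ∃ k : ℤ, u - v = 2 * Real.pi * k := by
  have h0 := add_left_cancel h
  have h1 : x * Real.cos u = y * Real.cos v := congrArg Prod.fst h0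
  have h2 : x * Real.sin u = y * Real.sin v := congrArg Prod.snd h0
  have hxy : x ^ 2 = y ^ 2 := by
    have e1 := Real.sin_sq_add_cos_sq u
    have e2 := Real.sin_sq_add_cos_sq v
    calc x ^ 2 = (x * Real.cos u) ^ 2 + (x * Real.sin u) ^ 2 := by linear_combination -x ^ 2 * e1
      _ = y ^ 2 := by rw [h1, h2]; linear_combination y ^ 2 * e2
  have hxy' : x = y := by nlinarith
  subst hxy'
  exact Real.Angle.angle_eq_iff_two_pi_dvd_sub.1
    (Real.Angle.cos_sin_inj (mul_left_cancel₀ hx.ne' h1) (mul_left_cancel₀ hx.ne' h2))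

lemma int_mul_two_pi_ne {x : ℝ} (h0 : 0 < x) (h1 : x < 2 * Real.pi) (k : ℤ) :
    x ≠ 2 * Real.pi * k := by
  intro h
  have hpi := Real.two_pi_pos
  have k0 : (0 : ℝ) < k := by
    by_contra! hk
    nlinarith
  have k1 : (k : ℝ) < 1 := by
    by_contra! hk
    nlinarith
  have k0' : 0 < k := by exact_mod_cast k0
  have k1' : k < 1 := by exact_mod_cast k1
  omega

lemma polar_ne {O : Pt} {x y u v : ℝ} (hx : 0 < x) (hy : 0 < y) (h0 : 0 < u - v)
    (h1 : u - v < 2 * Real.pi) : O + x • dir u ≠ O + y • dir v := fun h => by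
  obtain ⟨k, hk⟩ := polar_inj hx hy h
  exact int_mul_two_pi_ne h0 h1 k hk

/-- A path avoiding `O` has continuous polar coordinates around `O`, with prescribed initial
angle. -/
lemma polar_lift (O : Pt) (f : unitInterval → Pt) (hf : Continuous f) (hO : ∀ t, f t ≠ O)
    (a s : ℝ) (hs : 0 < s) (h0 : f 0 = O + s • dir a) :
    ∃ g R : unitInterval → ℝ, Continuous g ∧ Continuous R ∧ g 0 = a ∧
      ∀ t, 0 < R t ∧ f t = O + R t • dir (g t) := by
  let z : unitInterval → ℂ := fun t => Complex.equivRealProdCLM.symm (f t - O)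
  have hz : Continuous z := by fun_prop
  have hz0 : ∀ t, z t ≠ 0 := by
    intro t h
    have : f t - O = 0 := Complex.equivRealProdCLM.symm.map_eq_zero_iff.1 h
    exact hO t (sub_eq_zero.1 this)
  have hn : ∀ t, 0 < ‖z t‖ := fun t => norm_pos_iff.2 (hz0 t)
  let γ : C(unitInterval, Circle) :=
    { toFun := fun t => ⟨z t / ‖z t‖, by
        rw [Submonoid.unitSphere, ← SetLike.mem_coe]
        simp [hz0 t]⟩
      continuous_toFun := by
        refine Continuous.subtype_mk (hz.div (by fun_prop) fun t => ?_) _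
        exact_mod_cast (hn t).ne' }
  have hz0' : z 0 = s * Complex.exp (a * Complex.I) := by
    have : z 0 = Complex.equivRealProdCLM.symm (s • dir a) := by simp [z, h0]
    rw [this]
    apply Complex.ext <;> simp [dir, Complex.exp_ofReal_mul_I_re, Complex.exp_ofReal_mul_I_im]
  have hγ0 : γ 0 = Circle.exp a := by
    apply Subtype.ext
    change z 0 / ‖z 0‖ = _
    rw [hz0', Circle.coe_exp]
    have : (s : ℂ) ≠ 0 := by exact_mod_cast hs.ne'
    simp [Complex.norm_exp_ofReal_mul_I, abs_of_pos hs, this]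
  obtain ⟨g, hg, hg0⟩ := Circle.isCoveringMap_exp.exists_path_lifts γ a hγ0
  refine ⟨g, fun t => ‖z t‖, g.continuous, hz.norm, hg0, fun t => ⟨hn t, ?_⟩⟩
  have h1 : Complex.exp (g t * Complex.I) = z t / ‖z t‖ := by
    rw [← Circle.coe_exp]
    exact congrArg Subtype.val (congrFun hg t)
  have hnc : (‖z t‖ : ℂ) ≠ 0 := by exact_mod_cast (hn t).ne'
  have h2 : z t = ‖z t‖ * Complex.exp (g t * Complex.I) := by
    rw [h1]; field_simp
  have h3 : f t - O = ‖z t‖ • dir (g t) := by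
    have e : f t - O = Complex.equivRealProdCLM (z t) :=
      (Complex.equivRealProdCLM.apply_symm_apply _).symm
    have er := congrArg Complex.re h2
    have ei := congrArg Complex.im h2
    rw [e]
    apply Prod.ext
    · simpa [dir, Complex.exp_ofReal_mul_I_re, Complex.exp_ofReal_mul_I_im] using er
    · simpa [dir, Complex.exp_ofReal_mul_I_re, Complex.exp_ofReal_mul_I_im] using ei
  rw [← h3]; abel

/-! ### Edges as radial graphs -/

/-- `A` is the graph, in polar coordinates around `O`, of the continuous positive radius function
`R` over the angles in `[a, b]`. -/
def IsRadialGraph (A : Set Pt) (O : Pt) (R : ℝ → ℝ) (a b : ℝ) : Prop :=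
  ContinuousOn R (Set.Icc a b) ∧ (∀ t ∈ Set.Icc a b, 0 < R t) ∧
    A = (fun t => O + R t • dir t) '' Set.Icc a b

lemma IsRadialGraph.mem {A : Set Pt} {O : Pt} {R : ℝ → ℝ} {a b t : ℝ}
    (h : IsRadialGraph A O R a b) (ht : t ∈ Set.Icc a b) : O + R t • dir t ∈ A := by
  rw [h.2.2]; exact ⟨t, ht, rfl⟩

/-- A path with injective continuous angle coordinate is a radial graph over the range of that
coordinate. -/
lemma radial_graph_of_lift (O : Pt) (f : unitInterval → Pt) (g R : unitInterval → ℝ)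
    (hg : Continuous g) (hR : Continuous R) (hinj : Function.Injective g)
    (hf : ∀ t, 0 < R t ∧ f t = O + R t • dir (g t)) {a b : ℝ} (hr : range g = Set.Icc a b) :
    ∃ ρ : ℝ → ℝ, IsRadialGraph (range f) O ρ a b := by
  have hinv : ∀ t, Function.invFun g (g t) = t := Function.leftInverse_invFun hinj
  refine ⟨fun x => R (Function.invFun g x), ?_, ?_, ?_⟩
  · rw [← hr]
    refine hR.comp_continuousOn ?_
    let e := (hg.isClosedEmbedding hinj).isEmbedding.toHomeomorph
    rw [continuousOn_iff_continuous_domRestrict]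
    convert e.symm.continuous using 1
    funext x
    obtain ⟨t, rfl⟩ := e.surjective x
    rw [e.symm_apply_apply]
    exact hinv t
  · intro t _
    exact (hf _).1
  · rw [← hr, ← range_comp]
    congr 1
    funext t
    simp only [Function.comp, hinv]
    exact (hf t).2

lemma ends_mem {n : ℕ} (D : SimpleDrawing n) {i j : Fin n} (hij : i ≠ j) :
    D.vtx i ∈ D.arc i j ∧ D.vtx j ∈ D.arc i j := by
  obtain ⟨f, -, -, h0, h1, hA⟩ := D.arc_simple i j hij
  rw [hA]
  exact ⟨⟨0, by simp, h0⟩, ⟨1, by simp, h1⟩⟩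

/-- A point of an edge on the same ray from `O` as the point `O + x • dir u` of that edge has the
same radius. -/
lemma radius_unique {n : ℕ} {D : SimpleDrawing n} {O : Pt} (hC : D.CMonotoneAt O) {i j : Fin n}
    (hij : i ≠ j) {x y u v : ℝ} (hx : 0 < x) (hy : 0 < y) (huv : dir u = dir v)
    (h1 : O + x • dir u ∈ D.arc i j) (h2 : O + y • dir v ∈ D.arc i j) : x = y := by
  rw [huv] at h1
  exact radius_eq (hC.2 (dir v) (dir_ne_zero v) i j hij ⟨⟨x, hx.le, rfl⟩, h1⟩
    ⟨⟨y, hy.le, rfl⟩, h2⟩)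

/-- An edge of a c-monotone drawing is a radial graph over one of the two angular intervals
between its endpoints. -/
lemma arc_polar {n : ℕ} {D : SimpleDrawing n} {O : Pt} (hC : D.CMonotoneAt O) {i j : Fin n}
    (hij : i ≠ j) {a b s s' : ℝ} (hab : a < b) (hba : b < a + 2 * Real.pi) (hs : 0 < s)
    (hs' : 0 < s') (hi : D.vtx i = O + s • dir a) (hj : D.vtx j = O + s' • dir b) :
    ∃ R : ℝ → ℝ, IsRadialGraph (D.arc i j) O R a b ∨
      IsRadialGraph (D.arc i j) O R (b - 2 * Real.pi) a := by
  obtain ⟨F, hFc, hFi, hF0, hF1, hA⟩ := D.arc_simple i j hij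
  let f : unitInterval → Pt := fun t => F t
  have hf : Continuous f := continuousOn_iff_continuous_domRestrict.1 hFc
  have hfi : Function.Injective f := fun x y h => Subtype.ext (hFi x.2 y.2 h)
  have hrange : D.arc i j = range f := by
    rw [hA, image_eq_range]
  have hmem : ∀ t, f t ∈ D.arc i j := fun t => hrange ▸ mem_range_self t
  have hO : ∀ t, f t ≠ O := by
    intro t h
    apply hC.1
    simp only [SimpleDrawing.drawingSet, mem_iUnion]
    exact ⟨i, j, hij, h ▸ hmem t⟩
  have hf0 : f 0 = O + s • dir a := by rw [← hi, ← hF0]; simp [f]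
  have hf1 : f 1 = O + s' • dir b := by rw [← hj, ← hF1]; simp [f]
  obtain ⟨g, R, hg, hR, hg0, hfg⟩ := polar_lift O f hf hO a s hs hf0
  have hmod : ∀ t u (k : ℤ), g t - g u = 2 * Real.pi * k → t = u := by
    intro t u k h
    have hd := dir_eq_of_angle k h
    have e := radius_unique hC hij (hfg t).1 (hfg u).1 hd ((hfg t).2 ▸ hmem t)
      ((hfg u).2 ▸ hmem u)
    apply hfi
    rw [(hfg t).2, (hfg u).2, e, hd]
  have hinj : Function.Injective g := fun t u h => hmod t u 0 (by simp [h])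
  obtain ⟨k, hk⟩ : ∃ k : ℤ, g 1 - b = 2 * Real.pi * k :=
    polar_inj (hfg 1).1 hs' (by rw [← (hfg 1).2, hf1])
  have hpi := Real.two_pi_pos
  -- An angular span of at least `2π` would make the edge meet the ray through `v_i` again.
  have hspan : ∀ c : ℤ, (c = 1 ∨ c = -1) → a + 2 * Real.pi * c ∉ range g := by
    rintro c hc ⟨t, ht⟩
    have h1 : t = 0 := hmod t 0 c (by rw [ht, hg0]; ring)
    rw [h1, hg0] at ht
    rcases hc with rfl | rfl <;> norm_num at ht
  have hconn : (range g).OrdConnected := (isPreconnected_range hg).ordConnected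
  have ha : a ∈ range g := ⟨0, hg0⟩
  have h1r : g 1 ∈ range g := mem_range_self 1
  have hup : g 1 < a + 2 * Real.pi := by
    by_contra! h
    exact hspan 1 (Or.inl rfl) (hconn.out ha h1r ⟨by push_cast; linarith, by push_cast; linarith⟩)
  have hlo : a - 2 * Real.pi < g 1 := by
    by_contra! h
    exact hspan (-1) (Or.inr rfl)
      (hconn.out h1r ha ⟨by push_cast; linarith, by push_cast; linarith⟩)
  rcases hg.strictMono_of_inj_boundedOrder' hinj with hm | hm
  · have h01 : a < g 1 := hg0 ▸ hm (by simp)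
    have hk0 : k = 0 := by
      have l1 : (-1 : ℝ) < k := by
        by_contra! h; nlinarith
      have l2 : (k : ℝ) < 1 := by
        by_contra! h; nlinarith
      have l1' : -1 < k := by exact_mod_cast l1
      have l2' : k < 1 := by exact_mod_cast l2
      omega
    have hg1 : g 1 = b := by rw [hk0] at hk; simp at hk; linarith
    have hr : range g = Set.Icc a b := by
      refine subset_antisymm ?_ (hconn.out ha (hg1 ▸ h1r))
      rintro _ ⟨t, rfl⟩
      exact ⟨hg0 ▸ hm.monotone unitInterval.nonneg', hg1 ▸ hm.monotone unitInterval.le_one'⟩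
    obtain ⟨ρ, hρ⟩ := radial_graph_of_lift O f g R hg hR hinj hfg hr
    exact ⟨ρ, Or.inl (hrange ▸ hρ)⟩
  · have h01 : g 1 < a := hg0 ▸ hm (by simp)
    have hk0 : k = -1 := by
      have l1 : (-2 : ℝ) < k := by
        by_contra! h; nlinarith
      have l2 : (k : ℝ) < 0 := by
        by_contra! h; nlinarith
      have l1' : -2 < k := by exact_mod_cast l1
      have l2' : k < 0 := by exact_mod_cast l2
      omega
    have hg1 : g 1 = b - 2 * Real.pi := by rw [hk0] at hk; push_cast at hk; linarith
    have hr : range g = Set.Icc (b - 2 * Real.pi) a := by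
      refine subset_antisymm ?_ (hconn.out (hg1 ▸ h1r) ha)
      rintro _ ⟨t, rfl⟩
      exact ⟨hg1 ▸ hm.antitone unitInterval.le_one', hg0 ▸ hm.antitone unitInterval.nonneg'⟩
    obtain ⟨ρ, hρ⟩ := radial_graph_of_lift O f g R hg hR hinj hfg hr
    exact ⟨ρ, Or.inr (hrange ▸ hρ)⟩

/-! ### Comparing radius functions -/

/-- Continuous functions that never agree on an interval keep their order there. -/
lemma lt_iff_lt_of_ne {F G : ℝ → ℝ} {x y : ℝ} (hxy : x ≤ y) (hF : ContinuousOn F (Set.Icc x y))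
    (hG : ContinuousOn G (Set.Icc x y)) (hne : ∀ t ∈ Set.Icc x y, F t ≠ G t) :
    F x < G x ↔ F y < G y := by
  have hx : x ∈ Set.Icc x y := left_mem_Icc.2 hxy
  have hy : y ∈ Set.Icc x y := right_mem_Icc.2 hxy
  constructor <;> intro h <;> by_contra! h'
  · obtain ⟨t, ht, e⟩ := isPreconnected_Icc.intermediate_value₂ hx hy hF hG h.le h'
    exact hne t ht e
  · obtain ⟨t, ht, e⟩ := isPreconnected_Icc.intermediate_value₂ hy hx hF hG h.le h'
    exact hne t ht e

/-- Three radius functions over `[b - 2π, a]`, `[c - 2π, b]` and `[a, c]` that agree pairwise at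
the common vertex (at angles `a`, `b`, `c` modulo `2π`) cannot be pairwise distinct at all other
angles, so two of the graphs meet again. -/
lemma no_radial_triple {f g h : ℝ → ℝ} {a b c : ℝ} (hab : a < b) (hbc : b < c)
    (hca : c < a + 2 * Real.pi)
    (hf : ContinuousOn f (Set.Icc (b - 2 * Real.pi) a))
    (hg : ContinuousOn g (Set.Icc (c - 2 * Real.pi) b)) (hh : ContinuousOn h (Set.Icc a c))
    (va : h a = f a) (vb : f (b - 2 * Real.pi) = g b) (vc : g (c - 2 * Real.pi) = h c)
    (hfg : ∀ t ∈ Set.Icc (c - 2 * Real.pi) a, f t ≠ g t)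
    (hhg : ∀ t ∈ Set.Icc a b, h t ≠ g t)
    (hfh : ∀ t ∈ Set.Icc b c, f (t - 2 * Real.pi) ≠ h t) : False := by
  have e1 : h a < g a ↔ h b < g b := lt_iff_lt_of_ne hab.le
    (hh.mono (Icc_subset_Icc le_rfl hbc.le)) (hg.mono (Icc_subset_Icc (by linarith) le_rfl)) hhg
  have e2 : f (c - 2 * Real.pi) < g (c - 2 * Real.pi) ↔ f a < g a :=
    lt_iff_lt_of_ne (by linarith) (hf.mono (Icc_subset_Icc (by linarith) le_rfl))
      (hg.mono (Icc_subset_Icc le_rfl hab.le)) hfg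
  have hf' : ContinuousOn (fun t => f (t - 2 * Real.pi)) (Set.Icc b c) := by
    refine hf.comp (by fun_prop) fun t ht => ⟨?_, ?_⟩
    · linarith [ht.1]
    · linarith [ht.2]
  have e3 : f (b - 2 * Real.pi) < h b ↔ f (c - 2 * Real.pi) < h c :=
    lt_iff_lt_of_ne hbc.le hf' (hh.mono (Icc_subset_Icc hab.le le_rfl)) hfh
  have hb := hhg b ⟨hab.le, le_rfl⟩
  rw [va] at e1
  rw [vc] at e2
  rw [vb] at e3
  rcases lt_or_gt_of_ne hb with h1 | h1
  · exact lt_asymm h1 (e3.2 (e2.2 (e1.2 h1)))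
  · exact lt_asymm h1 (e1.1 (e2.1 (e3.1 h1)))

/-- For `i < j`, the edge `v_i v_j` crosses the ray exactly when it is a radial graph over the
angular interval containing `φ`. -/
lemma crosses_or_not {n : ℕ} {D : SimpleDrawing n} {O d : Pt} {φ : ℝ} {θ : Fin n → ℝ}
    (hC : D.CMonotoneAt O) (hLab : D.IsCCWLabeling O d φ θ) {i j : Fin n} (hij : i < j) :
    ((rayFrom O d ∩ D.arc i j).Nonempty ∧
        ∃ R, IsRadialGraph (D.arc i j) O R (θ j - 2 * Real.pi) (θ i)) ∨
      (¬ (rayFrom O d ∩ D.arc i j).Nonempty ∧ ∃ R, IsRadialGraph (D.arc i j) O R (θ i) (θ j)) := by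
  obtain ⟨⟨s₀, hs₀, hd⟩, hmono, hθ, hv⟩ := hLab
  obtain ⟨si, hsi, hi⟩ := hv i
  obtain ⟨sj, hsj, hj⟩ := hv j
  change d = s₀ • dir φ at hd
  have hi1 := (hθ i).1
  have hj2 := (hθ j).2
  obtain ⟨R, hR | hR⟩ := arc_polar hC hij.ne (hmono hij) (by linarith) hsi hsj hi hj
  · refine Or.inr ⟨?_, R, hR⟩
    rintro ⟨x, ⟨t, ht, hx⟩, hxA⟩
    rw [hR.2.2] at hxA
    obtain ⟨u, hu, hux⟩ := hxA
    dsimp only at hux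
    rw [hx, hd, smul_smul] at hux
    have hRu := hR.2.1 u hu
    rcases ht.eq_or_lt with rfl | ht
    · rw [zero_mul, zero_smul] at hux
      rcases smul_eq_zero.1 (add_left_cancel hux) with h | h
      · exact hRu.ne' h
      · exact dir_ne_zero u h
    · exact polar_ne hRu (mul_pos ht hs₀) (by linarith [hu.1]) (by linarith [hu.2]) hux
  · refine Or.inl ⟨?_, R, hR⟩
    have hφ : φ ∈ Set.Icc (θ j - 2 * Real.pi) (θ i) := ⟨by linarith, hi1.le⟩
    refine ⟨O + R φ • dir φ, ⟨R φ / s₀, (div_pos (hR.2.1 φ hφ) hs₀).le, ?_⟩, hR.mem hφ⟩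
    rw [hd, smul_smul, div_mul_cancel₀ _ hs₀.ne']

lemma cross_trans {n : ℕ} {D : SimpleDrawing n} {O d : Pt} {φ : ℝ} {θ : Fin n → ℝ}
    (hC : D.CMonotoneAt O) (hLab : D.IsCCWLabeling O d φ θ) {i j k : Fin n} (hij : i < j)
    (hjk : j < k) (h1 : (rayFrom O d ∩ D.arc i j).Nonempty)
    (h2 : (rayFrom O d ∩ D.arc j k).Nonempty) : (rayFrom O d ∩ D.arc i k).Nonempty := by
  by_contra h3
  have hik := hij.trans hjk
  obtain ⟨-, f, hf⟩ := (crosses_or_not hC hLab hij).resolve_right fun h => h.1 h1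
  obtain ⟨-, g, hg⟩ := (crosses_or_not hC hLab hjk).resolve_right fun h => h.1 h2
  obtain ⟨-, h, hh⟩ := (crosses_or_not hC hLab hik).resolve_left fun h => h3 h.1
  obtain ⟨-, hmono, hθ, hv⟩ := hLab
  obtain ⟨si, hsi, hi⟩ := hv i
  obtain ⟨sj, hsj, hj⟩ := hv j
  obtain ⟨sk, hsk, hk⟩ := hv k
  change D.vtx i = O + si • dir (θ i) at hi
  change D.vtx j = O + sj • dir (θ j) at hj
  change D.vtx k = O + sk • dir (θ k) at hk
  have hab := hmono hij
  have hbc := hmono hjk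
  have hi1 := (hθ i).1
  have hk2 := (hθ k).2
  have hca : θ k < θ i + 2 * Real.pi := by linarith
  have mij := ends_mem D hij.ne
  have mjk := ends_mem D hjk.ne
  have mik := ends_mem D hik.ne
  rw [hi, hj] at mij
  rw [hj, hk] at mjk
  rw [hi, hk] at mik
  have tfi : θ i ∈ Set.Icc (θ j - 2 * Real.pi) (θ i) := ⟨by linarith, le_rfl⟩
  have tfj : θ j - 2 * Real.pi ∈ Set.Icc (θ j - 2 * Real.pi) (θ i) := ⟨le_rfl, by linarith⟩
  have tgj : θ j ∈ Set.Icc (θ k - 2 * Real.pi) (θ j) := ⟨by linarith, le_rfl⟩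
  have tgk : θ k - 2 * Real.pi ∈ Set.Icc (θ k - 2 * Real.pi) (θ j) := ⟨le_rfl, by linarith⟩
  have thi : θ i ∈ Set.Icc (θ i) (θ k) := ⟨le_rfl, by linarith⟩
  have thk : θ k ∈ Set.Icc (θ i) (θ k) := ⟨by linarith, le_rfl⟩
  have fi : f (θ i) = si := radius_unique hC hij.ne (hf.2.1 _ tfi) hsi rfl (hf.mem tfi) mij.1
  have fj : f (θ j - 2 * Real.pi) = sj :=
    radius_unique hC hij.ne (hf.2.1 _ tfj) hsj (dir_sub_two_pi _) (hf.mem tfj) mij.2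
  have gj : g (θ j) = sj := radius_unique hC hjk.ne (hg.2.1 _ tgj) hsj rfl (hg.mem tgj) mjk.1
  have gk : g (θ k - 2 * Real.pi) = sk :=
    radius_unique hC hjk.ne (hg.2.1 _ tgk) hsk (dir_sub_two_pi _) (hg.mem tgk) mjk.2
  have hi' : h (θ i) = si := radius_unique hC hik.ne (hh.2.1 _ thi) hsi rfl (hh.mem thi) mik.1
  have hk' : h (θ k) = sk := radius_unique hC hik.ne (hh.2.1 _ thk) hsk rfl (hh.mem thk) mik.2
  refine no_radial_triple hab hbc hca hf.1 hg.1 hh.1 (hi'.trans fi.symm) (fj.trans gj.symm)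
    (gk.trans hk'.symm) ?_ ?_ ?_
  · intro t ht e
    have tf : t ∈ Set.Icc (θ j - 2 * Real.pi) (θ i) := ⟨by linarith [ht.1], ht.2⟩
    have tg : t ∈ Set.Icc (θ k - 2 * Real.pi) (θ j) := ⟨ht.1, by linarith [ht.2]⟩
    have m1 := hf.mem tf
    have m2 := hg.mem tg
    rw [← e] at m2
    rw [D.arc_symm] at m1
    have m : O + f t • dir t ∈ D.arc j i ∩ D.arc j k := ⟨m1, m2⟩
    rw [D.adj_inter j i k hij.ne' hjk.ne hik.ne, mem_singleton_iff, hj] at m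
    exact polar_ne hsj (hf.2.1 t tf) (by linarith [ht.2]) (by linarith [ht.1]) m.symm
  · intro t ht e
    have th : t ∈ Set.Icc (θ i) (θ k) := ⟨ht.1, by linarith [ht.2]⟩
    have tg : t ∈ Set.Icc (θ k - 2 * Real.pi) (θ j) := ⟨by linarith [ht.1], ht.2⟩
    have m1 := hh.mem th
    have m2 := hg.mem tg
    rw [← e, D.arc_symm] at m2
    rw [D.arc_symm] at m1
    have m : O + h t • dir t ∈ D.arc k i ∩ D.arc k j := ⟨m1, m2⟩
    rw [D.adj_inter k i j hik.ne' hjk.ne' hij.ne, mem_singleton_iff, hk] at m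
    exact polar_ne hsk (hh.2.1 t th) (by linarith [ht.2]) (by linarith [ht.1]) m.symm
  · intro t ht e
    have th : t ∈ Set.Icc (θ i) (θ k) := ⟨by linarith [ht.1], ht.2⟩
    have tf : t - 2 * Real.pi ∈ Set.Icc (θ j - 2 * Real.pi) (θ i) :=
      ⟨by linarith [ht.1], by linarith [ht.2]⟩
    have m1 := hf.mem tf
    have m2 := hh.mem th
    rw [e, dir_sub_two_pi] at m1
    have m : O + h t • dir t ∈ D.arc i j ∩ D.arc i k := ⟨m1, m2⟩
    rw [D.adj_inter i j k hij.ne hik.ne hjk.ne, mem_singleton_iff, hi] at m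
    exact polar_ne (hh.2.1 t th) hsi (by linarith [ht.1]) (by linarith [ht.2]) m

/-- In a c-monotone drawing of `K n` labeled counterclockwise around `O`
with a ray `r` counterclockwise between `v_n` and `v_1`: if `i < j < k` and both
`v_i v_j` and `v_j v_k` cross `r`, then `v_i v_k` crosses `r`; consequently `⪯` is a
partial order on the vertices. -/
theorem stmt_12 (n : ℕ) (D : SimpleDrawing n) (O d : Pt) (φ : ℝ) (θ : Fin n → ℝ)
    (hC : D.CMonotoneAt O) (hLab : D.IsCCWLabeling O d φ θ) :
    (∀ i j k : Fin n, i < j → j < k →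
      (rayFrom O d ∩ D.arc i j).Nonempty → (rayFrom O d ∩ D.arc j k).Nonempty →
      (rayFrom O d ∩ D.arc i k).Nonempty) ∧
    Reflexive (crossRel D O d) ∧ AntiSymmetric (crossRel D O d) ∧
    Transitive (crossRel D O d) := by
  refine ⟨fun i j k hij hjk h1 h2 => cross_trans hC hLab hij hjk h1 h2, fun i => Or.inl rfl, ?_, ?_⟩
  · rintro i j (h | ⟨h, -⟩) (h' | ⟨h', -⟩)
    · exact h
    · exact h
    · exact h'.symm
    · exact absurd h' h.asymm
  · rintro i j k (rfl | ⟨h, hr⟩) (rfl | ⟨h', hr'⟩)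
    · exact Or.inl rfl
    · exact Or.inr ⟨h', hr'⟩
    · exact Or.inr ⟨h, hr⟩
    · exact Or.inr ⟨h.trans h', cross_trans hC hLab h h' hr hr'⟩
end

section
/- Let D be a generalized twisted drawing of K_n with n ≥ 3, with vertices labeled v_1,…,v_n so that the rays from O through v_1,…,v_n appear in counterclockwise order around O and the ray r lies counterclockwise between the ray through v_n and the ray through v_1. Then: (i) there exists an index i with 1 ≤ i ≤ n−1 such that the bounded connected component of the complement of the Jordan curve formed by the edge v_iv_{i+1} together with the straight-line segments Ov_i and Ov_{i+1} contains no vertex of D; and (ii) there exists an index j ≠ i with 1 ≤ j ≤ n−1 such that the unbounded connected component of the complement of the Jordan curve formed by the edge v_jv_{j+1} together with the straight-line segments Ov_j and Ov_{j+1} contains no vertex of D. -/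
/-!
In polar coordinates around `O`, an edge `v_a v_b` with `a < b` meets every ray at most once and
meets the ray `r`, so it leaves `v_a` clockwise, crosses `r` and reaches `v_b` from the other side:
it is the graph of a radial function on the angles `[θ b - 2π, θ a]` (`arc_eq_graph`, by lifting
the edge through the complex exponential). Two edges with a common endpoint have no other common
point, so one lies below the other on the whole range of angles they share, and this order can be
read off on `r`.

Consider the edge `v_a v_b` that crosses `r` closest to `O` (`exists_lowest_edge`). A vertex `v_k`
with `k > b` lies above it, since `v_a v_k` does on `r` and hence up to `v_k`; likewise, using
`v_k v_b`, if `k < a`. A vertex `v_c` with `a < c < b` cannot exist: `v_a v_b` is below `v_a v_c` on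
`r`, hence at `v_b`, so `v_c v_b`, which ends at `v_b`, is below `v_a v_c` on `r`; the same argument
at `v_a` gives the opposite order. So `b = a + 1`, and all other vertices are above the edge.
Dually, all other vertices are below the edge that crosses `r` farthest from `O`. The two edges
differ because there is a third vertex.

Finally, a vertex above the edge escapes to infinity along its ray (`not_isBounded_of_above`), and
one below it lies in a bounded star-shaped region that is relatively clopen in the complement of
the wedge curve (`isBounded_of_below`). Neither needs the Jordan curve theorem.
-/


open Set

/-- The Jordan curve formed by the edge between vertices `a` and `b` of `D` together
with the straight-line segments from `O` to these two vertices. -/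
def SimpleDrawing.wedgeCurve {n : ℕ} (D : SimpleDrawing n) (O : Pt) (a b : Fin n) :
    Set Pt :=
  D.arc a b ∪ segment ℝ O (D.vtx a) ∪ segment ℝ O (D.vtx b)

/-! ### Polar coordinates around `O` -/

/-- The point with logarithmic radius `l` and angle `α` in polar coordinates around `O`.
The logarithmic radius makes this a shifted copy of the complex exponential. -/
noncomputable def polar (O : Pt) (l α : ℝ) : Pt :=
  O + Real.exp l • ((Real.cos α, Real.sin α) : Pt)

lemma polar_eq_exp (O : Pt) (l α : ℝ) :
    polar O l α = O + Complex.equivRealProdCLM (Complex.exp (l + α * Complex.I)) := by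
  simp [polar, Complex.exp_add, Complex.exp_mul_I, Complex.equivRealProdCLM_apply,
    ← Complex.ofReal_exp, ← Complex.ofReal_cos, ← Complex.ofReal_sin]

lemma polar_inj_s14 {O : Pt} {l l' α β : ℝ} (h : polar O l α = polar O l' β) :
    l = l' ∧ ∃ m : ℤ, α = β + m * (2 * Real.pi) := by
  rw [polar_eq_exp, polar_eq_exp] at h
  have h1 := Complex.equivRealProdCLM.injective (add_left_cancel h)
  obtain ⟨m, hm⟩ := Complex.exp_eq_exp_iff_exists_int.1 h1
  refine ⟨by simpa using congrArg Complex.re hm, m, by simpa using congrArg Complex.im hm⟩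

lemma polar_add_int (O : Pt) (l α : ℝ) (m : ℤ) :
    polar O l (α + m * (2 * Real.pi)) = polar O l α := by
  simp [polar]

lemma polar_sub_two_pi (O : Pt) (l α : ℝ) :
    polar O l (α - 2 * Real.pi) = polar O l α := by
  simp [polar]

lemma polar_ne_s14 (O : Pt) (l α : ℝ) : polar O l α ≠ O := by
  rw [polar_eq_exp]
  intro h
  have h2 := (map_eq_zero_iff _ Complex.equivRealProdCLM.injective).1 (left_eq_add.1 h.symm)
  exact Complex.exp_ne_zero _ h2

lemma polar_scale (O : Pt) (l α : ℝ) {s : ℝ} (hs : 0 < s) :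
    O + s • (polar O l α - O) = polar O (l + Real.log s) α := by
  simp only [polar, add_sub_cancel_left, smul_smul, Real.exp_add, Real.exp_log hs]
  rw [mul_comm]

lemma continuous_polar (O : Pt) : Continuous fun p : ℝ × ℝ => polar O p.1 p.2 := by
  unfold polar; fun_prop

lemma isOpenMap_polar (O : Pt) : IsOpenMap fun p : ℝ × ℝ => polar O p.1 p.2 := by
  have h : (fun p : ℝ × ℝ => polar O p.1 p.2) = (fun x => O + x) ∘ Complex.equivRealProdCLM ∘
      Complex.exp ∘ Complex.equivRealProdCLM.symm := by
    funext p
    simp [polar_eq_exp, Complex.equivRealProdCLM_symm_apply]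
  rw [h]
  exact (isOpenMap_add_left O).comp (Complex.equivRealProdCLM.toHomeomorph.isOpenMap.comp
    (Complex.isOpenMap_exp.comp Complex.equivRealProdCLM.symm.toHomeomorph.isOpenMap))

/-- Path lifting through the exponential: a path avoiding `O` has continuous polar
coordinates, with prescribed angle at the start. -/
lemma exists_polar_lift_s14 (O : Pt) (f : unitInterval → Pt) (hf : Continuous f)
    (hO : ∀ t, f t ≠ O) (l₀ α₀ : ℝ) (h0 : f 0 = polar O l₀ α₀) :
    ∃ L A : C(unitInterval, ℝ), (∀ t, f t = polar O (L t) (A t)) ∧ A 0 = α₀ := by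
  have hne : ∀ t, Complex.equivRealProdCLM.symm (f t - O) ≠ 0 := fun t h =>
    hO t (sub_eq_zero.1 ((map_eq_zero_iff _ Complex.equivRealProdCLM.symm.injective).1 h))
  let γ : C(unitInterval, {z : ℂ // z ≠ 0}) :=
    ⟨fun t => ⟨Complex.equivRealProdCLM.symm (f t - O), hne t⟩, by fun_prop⟩
  obtain ⟨Γ, hΓ, hΓ0⟩ := Complex.isCoveringMap_exp.exists_path_lifts γ (l₀ + α₀ * Complex.I) (by
    apply Subtype.ext
    change Complex.equivRealProdCLM.symm (f 0 - O) = _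
    rw [h0, polar_eq_exp, add_sub_cancel_left, ContinuousLinearEquiv.symm_apply_apply])
  refine ⟨⟨fun t => (Γ t).re, by fun_prop⟩, ⟨fun t => (Γ t).im, by fun_prop⟩, fun t => ?_, ?_⟩
  · have h1 : Complex.exp (Γ t) = Complex.equivRealProdCLM.symm (f t - O) :=
      congrArg Subtype.val (congrFun hΓ t)
    rw [polar_eq_exp]
    simp only [ContinuousMap.coe_mk, Complex.re_add_im]
    rw [h1, ContinuousLinearEquiv.apply_symm_apply, add_sub_cancel]
  · simp [hΓ0]

/-! ### Edges as graphs of functions of the angle -/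

/-- An arc met at most once by each ray from `O` and met by the ray of angle `φ`, joining
points at angles `θa < θb` in `(φ, φ + 2π)`, has to run through the angle `φ`. It is therefore
the graph, in polar coordinates, of a function on `[θb - 2π, θa]`. -/
lemma arc_eq_graph {O : Pt} {A : Set Pt} {φ θa θb ra rb : ℝ}
    (hA : IsSimpleArc A (polar O ra θa) (polar O rb θb)) (hO : O ∉ A)
    (hmono : ∀ l l' α, polar O l α ∈ A → polar O l' α ∈ A → l = l')
    (hray : ∃ l, polar O l φ ∈ A) (ha : φ < θa) (hab : θa < θb) (hb : θb < φ + 2 * Real.pi) :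
    ∃ g : ℝ → ℝ, Continuous g ∧
      ∀ x, x ∈ A ↔ ∃ α ∈ Set.Icc (θb - 2 * Real.pi) θa, x = polar O (g α) α := by
  obtain ⟨f, hfc, hfi, hf0, hf1, rfl⟩ := hA
  have hmem : ∀ t : unitInterval, f t ∈ f '' Set.Icc 0 1 := fun t => ⟨t, t.2, rfl⟩
  obtain ⟨L, A, hLA, hA0⟩ := exists_polar_lift_s14 O (fun t : unitInterval => f t)
    (continuousOn_iff_continuous_domRestrict.1 hfc)
    (fun t h => hO (h ▸ hmem t)) ra θa (by simpa using hf0)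
  -- two angles on the arc that agree modulo `2π` come from the same parameter
  have key : ∀ (s t : unitInterval) (m : ℤ), A s = A t + m * (2 * Real.pi) → s = t := by
    intro s t m h
    have hs := hmem s
    have ht := hmem t
    have e1 : f s = _ := hLA s
    have e2 : f t = _ := hLA t
    rw [h, polar_add_int] at e1
    have hl := hmono (L s) (L t) (A t) (e1 ▸ hs) (e2 ▸ ht)
    rw [hl, ← e2] at e1
    exact Subtype.ext (hfi s.2 t.2 e1)
  have hinj : Function.Injective A := fun s t h => key s t 0 (by simpa using h)
  obtain ⟨m, hm⟩ : ∃ m : ℤ, A 1 = θb + m * (2 * Real.pi) := by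
    have e1 := hLA 1
    simp only [Set.Icc.coe_one, hf1] at e1
    exact (polar_inj_s14 e1.symm).2
  have hpi := Real.pi_pos
  have h01 : (0 : unitInterval) ≤ 1 := zero_le_one
  have hlt : A 1 < θa + 2 * Real.pi := by
    by_contra! h
    obtain ⟨t, -, ht⟩ := intermediate_value_Icc h01 A.continuous.continuousOn
      (show θa + 2 * Real.pi ∈ Set.Icc (A 0) (A 1) from ⟨by rw [hA0]; linarith, h⟩)
    have := key t 0 1 (by rw [ht, hA0]; simp)
    rw [this, hA0] at ht
    linarith
  have hgt : θa - 2 * Real.pi < A 1 := by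
    by_contra! h
    obtain ⟨t, -, ht⟩ := intermediate_value_Icc' h01 A.continuous.continuousOn
      (show θa - 2 * Real.pi ∈ Set.Icc (A 1) (A 0) from ⟨h, by rw [hA0]; linarith⟩)
    have := key t 0 (-1) (by rw [ht, hA0]; push_cast; ring)
    rw [this, hA0] at ht
    linarith
  have hm1 : m < 1 := by
    by_contra! h
    have : (1 : ℝ) ≤ m := by exact_mod_cast h
    nlinarith
  have hm2 : -2 < m := by
    by_contra! h
    have : (m : ℝ) ≤ -2 := by exact_mod_cast h
    nlinarith
  have hm0 : m ≠ 0 := by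
    rintro rfl
    have hA1 : A 1 = θb := by simpa using hm
    have hsm : StrictMono A := A.continuous.strictMono_of_inj_boundedOrder
      (by change A 0 ≤ A 1; rw [hA0, hA1]; exact hab.le) hinj
    obtain ⟨l, t, ht, hft⟩ := hray
    have e := hLA ⟨t, ht⟩
    simp only [hft] at e
    obtain ⟨-, k, hk⟩ := polar_inj_s14 e.symm
    have h1 : θa ≤ A ⟨t, ht⟩ := hA0 ▸ hsm.monotone ht.1
    have h2 : A ⟨t, ht⟩ ≤ θb := hA1 ▸ hsm.monotone ht.2
    rcases le_or_gt k 0 with hk0 | hk0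
    · have : (k : ℝ) ≤ 0 := by exact_mod_cast hk0
      nlinarith
    · have : (1 : ℝ) ≤ k := by exact_mod_cast hk0
      nlinarith
  obtain rfl : m = -1 := by omega
  have hA1 : A 1 = θb - 2 * Real.pi := by rw [hm]; push_cast; ring
  have hsa : StrictAnti A := A.continuous.strictAnti_of_inj_boundedOrder
      (by change A 1 ≤ A 0; rw [hA0, hA1]; linarith) hinj
  -- the extension theorem replaces the inverse of `A` here
  obtain ⟨g, hg⟩ := ContinuousMap.exists_extension (A.continuous.isClosedEmbedding hinj) L
  have hgA : ∀ t, g (A t) = L t := fun t => DFunLike.congr_fun hg t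
  refine ⟨g, g.continuous, fun x => ⟨?_, ?_⟩⟩
  · rintro ⟨t, ht, rfl⟩
    refine ⟨A ⟨t, ht⟩, ⟨hA1 ▸ hsa.antitone ht.2, hA0 ▸ hsa.antitone ht.1⟩, ?_⟩
    rw [hgA]
    exact hLA ⟨t, ht⟩
  · rintro ⟨α, hα, rfl⟩
    rw [← hA1, ← hA0] at hα
    obtain ⟨t, -, rfl⟩ := intermediate_value_Icc' h01 A.continuous.continuousOn hα
    rw [hgA, ← hLA t]
    exact hmem t

/-! ### The edge crossing the ray lowest -/

lemma lt_of_ne_on_uIcc {g₁ g₂ : ℝ → ℝ} (h₁ : Continuous g₁) (h₂ : Continuous g₂) {x y : ℝ}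
    (hne : ∀ α ∈ Set.uIcc x y, g₁ α ≠ g₂ α) (hx : g₁ x < g₂ x) : g₁ y < g₂ y := by
  by_contra! hy
  obtain ⟨α, hα, h0⟩ := intermediate_value_uIcc (h₂.sub h₁).continuousOn
    (show (0 : ℝ) ∈ Set.uIcc (g₂ x - g₁ x) (g₂ y - g₁ y) from
      Set.mem_uIcc.2 (Or.inr ⟨by linarith, by linarith⟩))
  exact hne α hα (sub_eq_zero.1 h0).symm

/-- The combinatorial core. The function `g a b`, for `a < b`, is the radial function of the edge
`v_a v_b` and `r k` the radius of `v_k`; adjacent edges meet only in their common vertex. Among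
all edges the one with the smallest value at the angle `φ` joins consecutive vertices, and all
other vertices lie above it. -/
lemma exists_lowest_edge {n : ℕ} (hn : 2 ≤ n) {φ : ℝ} {θ : Fin n → ℝ}
    (hφ : ∀ i, φ < θ i) (hφtop : ∀ i, θ i < φ + 2 * Real.pi) (r : Fin n → ℝ)
    (g : Fin n → Fin n → ℝ → ℝ) (hc : ∀ a b, a < b → Continuous (g a b))
    (hfst : ∀ a b, a < b → g a b (θ a) = r a)
    (hsnd : ∀ a b, a < b → g a b (θ b - 2 * Real.pi) = r b)
    (hright : ∀ k a b, k < a → a < b → ∀ α ∈ Set.Icc (θ b - 2 * Real.pi) (θ k),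
      g a b α = g k b α → α = θ b - 2 * Real.pi)
    (hleft : ∀ a b c, a < b → b < c → ∀ α ∈ Set.Icc (θ c - 2 * Real.pi) (θ a),
      g a b α = g a c α → α = θ a)
    (hmid : ∀ a c b, a < c → c < b → ∀ α ∈ Set.Icc (θ b - 2 * Real.pi) (θ a),
      g a c α ≠ g c b α) :
    ∃ (i : ℕ) (hi : i + 1 < n),
      (∀ k : Fin n, k.1 < i → g ⟨i, by omega⟩ ⟨i + 1, hi⟩ (θ k) < r k) ∧
      (∀ k : Fin n, i + 1 < k.1 →
        g ⟨i, by omega⟩ ⟨i + 1, hi⟩ (θ k - 2 * Real.pi) < r k) := by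
  obtain ⟨⟨a, b⟩, hab, hmin⟩ := Set.exists_min_image {p : Fin n × Fin n | p.1 < p.2}
    (fun p => g p.1 p.2 φ) (Set.toFinite _) ⟨(⟨0, by omega⟩, ⟨1, by omega⟩), by simp⟩
  simp only [Set.mem_ofPred_eq, Prod.forall] at hab hmin
  -- a vertex after `b`, respectively before `a`, lies above the minimal edge
  have above_right : ∀ c, b < c → g a b (θ c - 2 * Real.pi) < r c := by
    intro c hbc
    rw [← hsnd a c (hab.trans hbc)]
    have hne : ∀ α ∈ Set.uIcc φ (θ c - 2 * Real.pi), g a b α ≠ g a c α := by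
      intro α hα h
      rw [Set.uIcc_of_ge (by linarith [hφtop c])] at hα
      have := hleft a b c hab hbc α ⟨hα.1, by linarith [hα.2, hφ a]⟩ h
      linarith [hα.2, hφ a]
    exact lt_of_ne_on_uIcc (hc _ _ hab) (hc _ _ (hab.trans hbc)) hne
      (lt_of_le_of_ne (hmin _ _ (hab.trans hbc)) (hne φ Set.left_mem_uIcc))
  have above_left : ∀ k, k < a → g a b (θ k) < r k := by
    intro k hka
    rw [← hfst k b (hka.trans hab)]
    have hne : ∀ α ∈ Set.uIcc φ (θ k), g a b α ≠ g k b α := by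
      intro α hα h
      rw [Set.uIcc_of_le (hφ k).le] at hα
      have := hright k a b hka hab α ⟨by linarith [hα.1, hφtop b], hα.2⟩ h
      linarith [hα.1, hφtop b]
    exact lt_of_ne_on_uIcc (hc _ _ hab) (hc _ _ (hka.trans hab)) hne
      (lt_of_le_of_ne (hmin _ _ (hka.trans hab)) (hne φ Set.left_mem_uIcc))
  have hconsec : b.1 = a.1 + 1 := by
    by_contra hne
    have hlt : a.1 + 1 < b.1 := by have : a.1 < b.1 := hab; omega
    let c : Fin n := ⟨a.1 + 1, by omega⟩
    have hac : a < c := Fin.lt_def.2 (Nat.lt_succ_self _)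
    have hcb : c < b := Fin.lt_def.2 hlt
    have ha := hφ a
    have hb := hφtop b
    -- `v_b` lies below the edge `ac`, so at `φ` the edge `cb` is below `ac`
    have h1 : ∀ α ∈ Set.uIcc φ (θ b - 2 * Real.pi), g a b α ≠ g a c α := by
      intro α hα h
      rw [Set.uIcc_of_ge (by linarith)] at hα
      have := hleft a c b hac hcb α ⟨hα.1, by linarith [hα.2]⟩ h.symm
      linarith [hα.2]
    have h2 := lt_of_ne_on_uIcc (hc _ _ hab) (hc _ _ hac) h1
      (lt_of_le_of_ne (hmin _ _ hac) (h1 φ Set.left_mem_uIcc))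
    rw [hsnd a b hab, ← hsnd c b hcb] at h2
    have h3 : g c b φ < g a c φ := lt_of_ne_on_uIcc (hc _ _ hcb) (hc _ _ hac) (by
      intro α hα h
      rw [Set.uIcc_of_le (by linarith)] at hα
      exact hmid a c b hac hcb α ⟨hα.1, by linarith [hα.2]⟩ h.symm) h2
    -- `v_a` lies below the edge `cb`, so at `φ` the edge `ac` is below `cb`
    have h4 : ∀ α ∈ Set.uIcc φ (θ a), g a b α ≠ g c b α := by
      intro α hα h
      rw [Set.uIcc_of_le ha.le] at hα
      have := hright a c b hac hcb α ⟨by linarith [hα.1], hα.2⟩ h.symm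
      linarith [hα.1]
    have h5 := lt_of_ne_on_uIcc (hc _ _ hab) (hc _ _ hcb) h4
      (lt_of_le_of_ne (hmin _ _ hcb) (h4 φ Set.left_mem_uIcc))
    rw [hfst a b hab, ← hfst a c hac] at h5
    have h6 : g a c φ < g c b φ := lt_of_ne_on_uIcc (hc _ _ hac) (hc _ _ hcb) (by
      intro α hα h
      rw [Set.uIcc_of_ge ha.le] at hα
      exact hmid a c b hac hcb α ⟨by linarith [hα.1], hα.2⟩ h) h5
    exact lt_asymm h3 h6
  have hb : b = ⟨a.1 + 1, hconsec ▸ b.2⟩ := Fin.ext hconsec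
  refine ⟨a.1, hconsec ▸ b.2, fun k hk => ?_, fun k hk => ?_⟩
  · simpa [← hb] using above_left k hk
  · simpa [← hb] using above_right k (Fin.lt_def.2 (by omega))

/-! ### The two sides of the wedge curve -/

lemma mem_segment_polar {O x : Pt} {l α : ℝ} (hx : x ∈ segment ℝ O (polar O l α)) :
    x = O ∨ ∃ l' ≤ l, x = polar O l' α := by
  rw [segment_eq_image'] at hx
  obtain ⟨s, hs, rfl⟩ := hx
  rcases hs.1.eq_or_lt with rfl | h0
  · left; simp
  · right
    exact ⟨_, by linarith [Real.log_nonpos h0.le hs.2], polar_scale O l α h0⟩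

lemma polar_mem_segment {O : Pt} {l l' α : ℝ} (h : l' ≤ l) :
    polar O l' α ∈ segment ℝ O (polar O l α) := by
  rw [segment_eq_image']
  refine ⟨Real.exp (l' - l), ⟨(Real.exp_pos _).le, Real.exp_le_one_iff.2 (by linarith)⟩, ?_⟩
  simp only [polar_scale O l α (Real.exp_pos _), Real.log_exp, add_sub_cancel]

lemma not_isBounded_polar_ray (O : Pt) (l₀ α : ℝ) :
    ¬ Bornology.IsBounded ((fun l => polar O l α) '' Set.Ici l₀) := by
  intro h
  obtain ⟨R, hR⟩ := h.exists_norm_le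
  set u : Pt := (Real.cos α, Real.sin α)
  have hu : 0 < ‖u‖ := norm_pos_iff.2 fun h0 => by
    have h1 : Real.cos α = 0 := congrArg Prod.fst h0
    have h2 : Real.sin α = 0 := congrArg Prod.snd h0
    simpa [h1, h2] using Real.sin_sq_add_cos_sq α
  obtain ⟨l, hl, hl₀⟩ := ((Real.tendsto_exp_atTop.eventually_gt_atTop ((R + ‖O‖) / ‖u‖)).and
    (Filter.eventually_ge_atTop l₀)).exists
  have h1 := hR _ ⟨l, hl₀, rfl⟩
  have h2 : ‖Real.exp l • u‖ ≤ ‖polar O l α‖ + ‖O‖ := by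
    have : Real.exp l • u = polar O l α - O := by simp [polar, u]
    rw [this]
    exact norm_sub_le _ _
  rw [norm_smul, Real.norm_eq_abs, Real.abs_exp] at h2
  rw [div_lt_iff₀ hu] at hl
  linarith

/-- A radial ray starting at a point and avoiding `W` joins that point to infinity in the complement
of `W`. -/
lemma not_isBounded_of_above {O : Pt} {W : Set Pt} {l α : ℝ}
    (h : ∀ l', l ≤ l' → polar O l' α ∉ W) :
    ¬ Bornology.IsBounded (connectedComponentIn Wᶜ (polar O l α)) := by
  intro hb
  refine not_isBounded_polar_ray O l α (hb.subset ?_)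
  have hpre : IsPreconnected ((fun l => polar O l α) '' Set.Ici l) :=
    isPreconnected_Ici.image _
      ((continuous_polar O).comp (Continuous.prodMk_left α)).continuousOn
  refine hpre.subset_connectedComponentIn ⟨l, Set.self_mem_Ici, rfl⟩ ?_
  rintro _ ⟨t, ht, rfl⟩
  exact h t ht

/-- The open star-shaped region below the graph of `g` over `(α₀, α₁)` is relatively clopen in the
complement of the wedge bounding it, so components of its points are bounded. -/
lemma isBounded_of_below {O : Pt} {A : Set Pt} {g : ℝ → ℝ} (hg : Continuous g) {α₀ α₁ l α : ℝ}
    (hA : ∀ x, x ∈ A ↔ ∃ α ∈ Set.Icc α₀ α₁, x = polar O (g α) α) (hα : α ∈ Set.Ioo α₀ α₁)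
    (hl : l < g α) :
    Bornology.IsBounded (connectedComponentIn
      (A ∪ segment ℝ O (polar O (g α₁) α₁) ∪ segment ℝ O (polar O (g α₀) α₀))ᶜ (polar O l α)) := by
  set W := A ∪ segment ℝ O (polar O (g α₁) α₁) ∪ segment ℝ O (polar O (g α₀) α₀) with hW
  by_cases hxW : polar O l α ∈ Wᶜ
  swap
  · rw [connectedComponentIn_eq_empty hxW]; exact Bornology.isBounded_empty
  have hAc : IsCompact A := by
    have : A = (fun α => polar O (g α) α) '' Set.Icc α₀ α₁ := by
      ext x; rw [hA]; simp only [Set.mem_image, eq_comm]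
    rw [this]
    exact isCompact_Icc.image ((continuous_polar O).comp (hg.prodMk continuous_id))
  -- `K` is the closed cone over the arc, `U` the open region
  set K : Set Pt := (fun p : ℝ × Pt => O + p.1 • (p.2 - O)) '' (Set.Icc 0 1 ×ˢ A) with hK
  have hKc : IsCompact K := (isCompact_Icc.prod hAc).image (by fun_prop)
  set U : Set Pt := (fun p : ℝ × ℝ => polar O p.1 p.2) ''
    {p | p.2 ∈ Set.Ioo α₀ α₁ ∧ p.1 < g p.2} with hU
  have hUo : IsOpen U := by
    refine isOpenMap_polar O _ (IsOpen.inter ?_ ?_)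
    · exact isOpen_Ioo.preimage continuous_snd
    · exact isOpen_lt continuous_fst (hg.comp continuous_snd)
  have hUK : U ⊆ K := by
    rintro _ ⟨⟨l, α⟩, ⟨hα, hl⟩, rfl⟩
    simp only at hα hl
    refine ⟨(Real.exp (l - g α), polar O (g α) α), ⟨⟨(Real.exp_pos _).le,
      Real.exp_le_one_iff.2 (by linarith)⟩, (hA _).2 ⟨α, Set.Ioo_subset_Icc_self hα, rfl⟩⟩, ?_⟩
    simp only [polar_scale O _ α (Real.exp_pos _), Real.log_exp, add_sub_cancel]
  have hKW : K ⊆ U ∪ W := by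
    rintro _ ⟨⟨s, y⟩, ⟨hs, hy⟩, rfl⟩
    simp only at hs hy
    obtain ⟨β, hβ, rfl⟩ := (hA y).1 hy
    rcases hs.1.eq_or_lt with rfl | h0
    · right; right; simpa using left_mem_segment ℝ O _
    simp only [polar_scale O _ β h0]
    have hlog : Real.log s ≤ 0 := Real.log_nonpos h0.le hs.2
    rcases hβ.1.eq_or_lt with rfl | hβ0
    · exact Or.inr (Or.inr (polar_mem_segment (by linarith)))
    rcases hβ.2.eq_or_lt with rfl | hβ1
    · exact Or.inr (Or.inl (Or.inr (polar_mem_segment (by linarith))))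
    rcases hlog.eq_or_lt with h1 | h1
    · rw [h1, add_zero]; exact Or.inr (Or.inl (Or.inl hy))
    · exact Or.inl ⟨(g β + Real.log s, β), ⟨⟨hβ0, hβ1⟩, by simpa using h1⟩, rfl⟩
  have hsub : connectedComponentIn Wᶜ (polar O l α) ⊆ U := by
    refine isPreconnected_connectedComponentIn.subset_left_of_subset_union hUo
      hKc.isClosed.isOpen_compl (Set.disjoint_left.2 fun x hx hx' => hx' (hUK hx)) ?_
      ⟨_, mem_connectedComponentIn hxW, (l, α), ⟨hα, hl⟩, rfl⟩
    intro x hx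
    by_cases hxK : x ∈ K
    · exact Or.inl ((hKW hxK).resolve_right (connectedComponentIn_subset _ _ hx))
    · exact Or.inr hxK
  exact hKc.isBounded.subset (hsub.trans hUK)

/-! ### The drawing in polar coordinates -/

lemma angle_cases {φ t α : ℝ} {m : ℤ} (ht : t ∈ Set.Ioo φ (φ + 2 * Real.pi))
    (hα : α ∈ Set.Ioo (φ - 2 * Real.pi) (φ + 2 * Real.pi)) (h : α = t + m * (2 * Real.pi)) :
    α = t ∨ α = t - 2 * Real.pi := by
  have hpi := Real.pi_pos
  have h1 : m < 1 := by
    by_contra! h'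
    have : (1 : ℝ) ≤ m := by exact_mod_cast h'
    nlinarith [ht.1, hα.2]
  have h2 : -2 < m := by
    by_contra! h'
    have : (m : ℝ) ≤ -2 := by exact_mod_cast h'
    nlinarith [ht.2, hα.1]
  obtain rfl | rfl : m = 0 ∨ m = -1 := by omega
  · left; simpa using h
  · right; rw [h]; push_cast; ring

/-- The drawing in polar coordinates: `r k` is the radius of `v_k`, and `g a b`, for `a < b`, is
the radial function of the edge `v_a v_b`, defined on `[θ b - 2π, θ a]`. -/
lemma exists_polar_drawing {n : ℕ} {D : SimpleDrawing n} {O d : Pt} {φ : ℝ} {θ : Fin n → ℝ}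
    (hGT : D.GenTwistedAt O d) (hLab : D.IsCCWLabeling O d φ θ) :
    ∃ (r : Fin n → ℝ) (g : Fin n → Fin n → ℝ → ℝ),
      (∀ k, D.vtx k = polar O (r k) (θ k)) ∧
      ∀ a b, a < b → Continuous (g a b) ∧ ∀ x, x ∈ D.arc a b ↔
        ∃ α ∈ Set.Icc (θ b - 2 * Real.pi) (θ a), x = polar O (g a b α) α := by
  obtain ⟨⟨hO, hmono⟩, -, hray⟩ := hGT
  obtain ⟨⟨s₀, hs₀, hd⟩, hθ, hφ, hv⟩ := hLab
  have hr : ∀ k, ∃ l, D.vtx k = polar O l (θ k) := by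
    intro k
    obtain ⟨s, hs, h⟩ := hv k
    exact ⟨Real.log s, by rw [h, polar, Real.exp_log hs]⟩
  choose r hr using hr
  have hOa : ∀ a b, a ≠ b → O ∉ D.arc a b := fun a b hab h =>
    hO (Set.mem_iUnion.2 ⟨a, Set.mem_iUnion.2 ⟨b, Set.mem_iUnion.2 ⟨hab, h⟩⟩⟩)
  have hg : ∀ a b, ∃ g : ℝ → ℝ, a < b → Continuous g ∧ ∀ x, x ∈ D.arc a b ↔
      ∃ α ∈ Set.Icc (θ b - 2 * Real.pi) (θ a), x = polar O (g α) α := by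
    intro a b
    by_cases hab : a < b
    swap
    · exact ⟨0, fun h => absurd h hab⟩
    have hA := D.arc_simple a b hab.ne
    rw [hr a, hr b] at hA
    have hinj : ∀ l l' α, polar O l α ∈ D.arc a b → polar O l' α ∈ D.arc a b → l = l' := by
      intro l l' α h h'
      have hne : ((Real.cos α, Real.sin α) : Pt) ≠ 0 := fun h0 => by
        have h1 : Real.cos α = 0 := congrArg Prod.fst h0
        have h2 : Real.sin α = 0 := congrArg Prod.snd h0
        simpa [h1, h2] using Real.sin_sq_add_cos_sq α
      exact (polar_inj_s14 (hmono _ hne a b hab.ne ⟨⟨_, (Real.exp_pos l).le, rfl⟩, h⟩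
        ⟨⟨_, (Real.exp_pos l').le, rfl⟩, h'⟩)).1
    have hφray : ∃ l, polar O l φ ∈ D.arc a b := by
      obtain ⟨x, ⟨t, ht, rfl⟩, hx⟩ := hray a b hab.ne
      rcases ht.eq_or_lt with rfl | ht
      · exact absurd (by simpa using hx) (hOa a b hab.ne)
      · refine ⟨Real.log (t * s₀), ?_⟩
        rw [hd, smul_smul] at hx
        rwa [polar, Real.exp_log (by positivity)]
    obtain ⟨g, h1, h2⟩ := arc_eq_graph hA (hOa a b hab.ne) hinj hφray (hφ a).1 (hθ hab) (hφ b).2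
    exact ⟨g, fun _ => ⟨h1, h2⟩⟩
  choose g hg using hg
  exact ⟨r, g, hr, hg⟩

/-! ### The two consecutive edges -/

/-- In a generalized twisted drawing of `K n` (`n ≥ 3`) labeled
counterclockwise around `O`: (i) for some `i`, the bounded region determined by the edge
`v_i v_{i+1}` and the segments `O v_i`, `O v_{i+1}` contains no vertex; (ii) for some
`j ≠ i`, the unbounded such region determined by `v_j v_{j+1}` contains no vertex. -/
theorem stmt_14 (n : ℕ) (hn : 3 ≤ n) (D : SimpleDrawing n) (O d : Pt)
    (φ : ℝ) (θ : Fin n → ℝ)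
    (hGT : D.GenTwistedAt O d) (hLab : D.IsCCWLabeling O d φ θ) :
    ∃ (i j : ℕ) (hi : i + 1 < n) (hj : j + 1 < n), j ≠ i ∧
      (∀ k : Fin n, D.vtx k ∉ D.wedgeCurve O ⟨i, by omega⟩ ⟨i + 1, hi⟩ →
        ¬ Bornology.IsBounded
          (connectedComponentIn (D.wedgeCurve O ⟨i, by omega⟩ ⟨i + 1, hi⟩)ᶜ (D.vtx k))) ∧
      (∀ k : Fin n, D.vtx k ∉ D.wedgeCurve O ⟨j, by omega⟩ ⟨j + 1, hj⟩ →
        Bornology.IsBounded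
          (connectedComponentIn (D.wedgeCurve O ⟨j, by omega⟩ ⟨j + 1, hj⟩)ᶜ (D.vtx k))) := by
  obtain ⟨r, g, hr, hg⟩ := exists_polar_drawing hGT hLab
  obtain ⟨-, hθ, hφ, -⟩ := hLab
  have hpi := Real.pi_pos
  have hwin : ∀ a b α, α ∈ Set.Icc (θ b - 2 * Real.pi) (θ a) →
      α ∈ Set.Ioo (φ - 2 * Real.pi) (φ + 2 * Real.pi) := fun a b α hα =>
    ⟨by linarith [hα.1, (hφ b).1], by linarith [hα.2, (hφ a).2]⟩
  have hwidth : ∀ a b, θ b - 2 * Real.pi < θ a := fun a b => by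
    linarith [(hφ b).2, (hφ a).1]
  have hmem : ∀ a b, a < b → ∀ α ∈ Set.Icc (θ b - 2 * Real.pi) (θ a),
      polar O (g a b α) α ∈ D.arc a b := fun a b hab α hα => ((hg a b hab).2 _).2 ⟨α, hα, rfl⟩
  -- the endpoints of an edge lie on it
  have hend : ∀ a b, a ≠ b → D.vtx a ∈ D.arc a b := by
    intro a b hab
    obtain ⟨f, -, -, h0, -, h⟩ := D.arc_simple a b hab
    exact h ▸ ⟨0, by simp, h0⟩
  have hfst : ∀ a b, a < b → g a b (θ a) = r a := by
    intro a b hab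
    obtain ⟨α, hα, h⟩ := ((hg a b hab).2 _).1 (hend a b hab.ne)
    rw [hr] at h
    obtain ⟨h1, m, hm⟩ := polar_inj_s14 h.symm
    rcases angle_cases (hφ a) (hwin a b α hα) hm with rfl | h2
    · exact h1
    · linarith [hα.1, hθ hab]
  have hsnd : ∀ a b, a < b → g a b (θ b - 2 * Real.pi) = r b := by
    intro a b hab
    obtain ⟨α, hα, h⟩ := ((hg a b hab).2 _).1 (D.arc_symm b a ▸ hend b a hab.ne')
    rw [hr] at h
    obtain ⟨h1, m, hm⟩ := polar_inj_s14 h.symm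
    rcases angle_cases (hφ b) (hwin a b α hα) hm with h2 | rfl
    · linarith [hα.2, hθ hab]
    · exact h1
  -- a common point of two edges at `v_s` is `v_s`
  have hshare : ∀ s p q l α, s ≠ p → s ≠ q → p ≠ q → polar O l α ∈ D.arc s p →
      polar O l α ∈ D.arc s q → α ∈ Set.Ioo (φ - 2 * Real.pi) (φ + 2 * Real.pi) →
      α = θ s ∨ α = θ s - 2 * Real.pi := by
    intro s p q l α hsp hsq hpq h1 h2 hα
    have h := D.adj_inter s p q hsp hsq hpq
    have h3 : polar O l α ∈ ({D.vtx s} : Set Pt) := h ▸ ⟨h1, h2⟩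
    rw [Set.mem_singleton_iff, hr] at h3
    obtain ⟨-, m, hm⟩ := polar_inj_s14 h3
    exact angle_cases (hφ s) hα hm
  have hright : ∀ k a b, k < a → a < b → ∀ α ∈ Set.Icc (θ b - 2 * Real.pi) (θ k),
      g a b α = g k b α → α = θ b - 2 * Real.pi := by
    intro k a b hka hab α hα h
    have h1 := hmem a b hab α ⟨hα.1, hα.2.trans (hθ hka).le⟩
    have h2 := hmem k b (hka.trans hab) α hα
    rw [← h, D.arc_symm] at h2
    rw [D.arc_symm] at h1
    refine (hshare b a k _ α hab.ne' (hka.trans hab).ne' hka.ne' h1 h2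
      (hwin k b α hα)).resolve_left fun h3 => ?_
    linarith [hα.2, hθ (hka.trans hab)]
  have hleft : ∀ a b c, a < b → b < c → ∀ α ∈ Set.Icc (θ c - 2 * Real.pi) (θ a),
      g a b α = g a c α → α = θ a := by
    intro a b c hab hbc α hα h
    have h1 := hmem a b hab α ⟨by linarith [hα.1, hθ hbc], hα.2⟩
    have h2 := hmem a c (hab.trans hbc) α hα
    rw [← h] at h2
    refine (hshare a b c _ α hab.ne (hab.trans hbc).ne hbc.ne h1 h2
      (hwin a c α hα)).resolve_right fun h3 => ?_
    linarith [hα.1, hθ (hab.trans hbc)]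
  have hmid : ∀ a c b, a < c → c < b → ∀ α ∈ Set.Icc (θ b - 2 * Real.pi) (θ a),
      g a c α ≠ g c b α := by
    intro a c b hac hcb α hα h
    have h1 := hmem a c hac α ⟨by linarith [hα.1, hθ hcb], hα.2⟩
    have h2 := hmem c b hcb α ⟨hα.1, hα.2.trans (hθ hac).le⟩
    rw [← h] at h2
    rw [D.arc_symm] at h1
    rcases hshare c a b _ α hac.ne' hcb.ne (hac.trans hcb).ne h1 h2 (hwin a b α hα) with h3 | h3
    · linarith [hα.2, hθ hac]
    · linarith [hα.1, hθ hcb]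
  obtain ⟨i, hi, hi₁, hi₂⟩ := exists_lowest_edge (by omega) (fun k => (hφ k).1)
    (fun k => (hφ k).2) r g (fun a b hab => (hg a b hab).1) hfst hsnd hright hleft hmid
  -- negating all radial functions turns the lowest edge into the highest one
  obtain ⟨j, hj, hj₁, hj₂⟩ := exists_lowest_edge (by omega) (fun k => (hφ k).1)
    (fun k => (hφ k).2) (-r) (fun a b => -g a b) (fun a b hab => (hg a b hab).1.neg)
    (fun a b hab => congrArg Neg.neg (hfst a b hab))
    (fun a b hab => congrArg Neg.neg (hsnd a b hab))
    (fun k a b hka hab α hα h => hright k a b hka hab α hα (neg_injective h))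
    (fun a b c hab hbc α hα h => hleft a b c hab hbc α hα (neg_injective h))
    (fun a c b hac hcb α hα h => hmid a c b hac hcb α hα (neg_injective h))
  simp only [Pi.neg_apply, neg_lt_neg_iff] at hj₁ hj₂
  refine ⟨i, j, hi, hj, ?_, ?_, ?_⟩
  · -- a third vertex cannot be both above and below the same edge
    rintro rfl
    rcases Nat.eq_zero_or_pos j with h0 | h0
    · exact lt_asymm (hi₂ ⟨2, by omega⟩ (by simp [h0])) (hj₂ ⟨2, by omega⟩ (by simp [h0]))
    · exact lt_asymm (hi₁ ⟨0, by omega⟩ h0) (hj₁ ⟨0, by omega⟩ h0)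
  · intro k hk
    generalize ha : (⟨i, by omega⟩ : Fin n) = a at *
    generalize hb : (⟨i + 1, hi⟩ : Fin n) = b at *
    have hab : a < b := by subst ha hb; simp
    have hka : k ≠ a := fun h => hk (Or.inl (Or.inr (h ▸ right_mem_segment ℝ O _)))
    have hkb : k ≠ b := fun h => hk (Or.inr (h ▸ right_mem_segment ℝ O _))
    -- distinct vertices have distinct directions, so the ray avoids both segments
    have hseg : ∀ c l', k ≠ c → polar O l' (θ k) ∉ segment ℝ O (D.vtx c) := by
      intro c l' hkc h
      rw [hr c] at h
      rcases mem_segment_polar h with h | ⟨l'', -, h⟩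
      · exact polar_ne_s14 O _ _ h
      · obtain ⟨-, m, hm⟩ := polar_inj_s14 h
        rcases angle_cases (hφ c) ⟨by linarith [(hφ k).1], (hφ k).2⟩ hm with h1 | h1
        · exact hkc (hθ.injective h1)
        · linarith [hwidth k c]
    rw [hr k]
    refine not_isBounded_of_above fun l' hl' hW => ?_
    rcases hW with (hW | hW) | hW
    · obtain ⟨α, hα, h⟩ := ((hg a b hab).2 _).1 hW
      obtain ⟨h1, m, hm⟩ := polar_inj_s14 h.symm
      rcases angle_cases (hφ k) (hwin a b α hα) hm with rfl | rfl
      · have hk1 : k.1 < i := by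
          have h2 : k < a := lt_of_le_of_ne (hθ.le_iff_le.1 hα.2) hka
          rw [← ha] at h2; exact h2
        linarith [hi₁ k hk1]
      · have hk1 : i + 1 < k.1 := by
          have h2 : b < k := lt_of_le_of_ne (hθ.le_iff_le.1 (by linarith [hα.1])) hkb.symm
          rw [← hb] at h2; exact h2
        linarith [hi₂ k hk1]
    · exact hseg a l' hka hW
    · exact hseg b l' hkb hW
  · intro k hk
    generalize ha : (⟨j, by omega⟩ : Fin n) = a at *
    generalize hb : (⟨j + 1, hj⟩ : Fin n) = b at *
    have hab : a < b := by subst ha hb; simp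
    have hka : k ≠ a := fun h => hk (Or.inl (Or.inr (h ▸ right_mem_segment ℝ O _)))
    have hkb : k ≠ b := fun h => hk (Or.inr (h ▸ right_mem_segment ℝ O _))
    have hW : D.wedgeCurve O a b = D.arc a b ∪ segment ℝ O (polar O (g a b (θ a)) (θ a)) ∪
        segment ℝ O (polar O (g a b (θ b - 2 * Real.pi)) (θ b - 2 * Real.pi)) := by
      rw [hfst a b hab, hsnd a b hab, polar_sub_two_pi, ← hr, ← hr]; rfl
    rw [hW]
    have hcase : k < a ∨ b < k := by
      rw [← ha, ← hb, Fin.lt_def, Fin.lt_def]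
      rw [← ha, Ne, Fin.ext_iff] at hka
      rw [← hb, Ne, Fin.ext_iff] at hkb
      simp only at hka hkb ⊢
      omega
    rcases hcase with h | h
    · rw [hr k]
      exact isBounded_of_below (hg a b hab).1 (hg a b hab).2 ⟨hwidth k b, hθ h⟩
        (hj₁ k (by rw [← ha] at h; exact h))
    · rw [hr k, ← polar_sub_two_pi O (r k) (θ k)]
      exact isBounded_of_below (hg a b hab).1 (hg a b hab).2
        ⟨by linarith [hθ h], hwidth a k⟩ (hj₂ k (by rw [← hb] at h; exact h))
end
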